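/- arXiv:2408.11177 — 3 statements merged into one kernel-verified Lean document; each statement's English description precedes it below -/
import Mathlib

section
/- Assume J̄ < ∞, ν > 0 and I_ν < 0. Let {q^{(k)}} ⊆ ℓ²(Z^d) be any minimizing sequence, i.e. M[q^{(k)}] = ν for all k and H[q^{(k)}] → I_ν. Then there exist a subsequence {q^{(n_k)}}, lattice shifts m_k ∈ Z^d, phases φ_k ∈ ℝ, and q* ∈ ℓ²(Z^d) with nonnegative entries such that e^{iφ_k} q^{(n_k)}(· − m_k) → q* in ℓ²(Z^d); in particular M[q*] = ν and H[q*] = I_ν. Moreover there exists ω > 0 such that −ω (q*)_n = (Lq*)_n − ((q*)_n)^p for all n ∈ Z^d. -/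
open scoped BigOperators
open Filter Topology

noncomputable section

/-- The `ℓ^∞` norm of a lattice point of `ℤ^d`, as a natural number. -/
def latNorm {d : ℕ} (m : Fin d → ℤ) : ℕ := Finset.univ.sup fun i => (m i).natAbs

/-- The summand `J_{|m|}` for `m ≠ 0` (and `0` for `m = 0`). -/
def JbarSummand (d : ℕ) (J : ℕ → ℝ) (m : Fin d → ℤ) : ℝ :=
  if m = 0 then 0 else J (latNorm m)

/-- `J̄ = Σ_{m ≠ 0} J_{|m|}`. -/
def Jbar (d : ℕ) (J : ℕ → ℝ) : ℝ := ∑' m : Fin d → ℤ, JbarSummand d J m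

/-- The quadratic form `⟨Lu,u⟩ = (1/2) Σ_n Σ_{m ≠ n} J_{|n-m|} |u_n - u_m|²`. -/
def pairing (d : ℕ) (J : ℕ → ℝ) (u : (Fin d → ℤ) → ℂ) : ℝ :=
  (1/2) * ∑' n : Fin d → ℤ, ∑' m : Fin d → ℤ,
    if m = n then 0 else J (latNorm (n - m)) * ‖u n - u m‖ ^ 2

/-- The mass `M[u] = Σ_n |u_n|²`. -/
def mass (d : ℕ) (u : (Fin d → ℤ) → ℂ) : ℝ := ∑' n : Fin d → ℤ, ‖u n‖ ^ 2

/-- Membership in `ℓ²(ℤ^d)`. -/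
def MemL2 (d : ℕ) (u : (Fin d → ℤ) → ℂ) : Prop := Summable fun n : Fin d → ℤ => ‖u n‖ ^ 2

/-- The potential term `Σ_n |u_n|^{p+1}`. -/
def ppot (d : ℕ) (p : ℝ) (u : (Fin d → ℤ) → ℂ) : ℝ := ∑' n : Fin d → ℤ, ‖u n‖ ^ (p + 1)

/-- The energy `H[u] = (1/2)⟨Lu,u⟩ - (1/(p+1)) Σ_n |u_n|^{p+1}`. -/
def energy (d : ℕ) (J : ℕ → ℝ) (p : ℝ) (u : (Fin d → ℤ) → ℂ) : ℝ :=
  (1/2) * pairing d J u - (1/(p+1)) * ppot d p u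

/-- `I_ν = inf {H[q] : q ∈ ℓ², M[q] = ν}`. -/
def Ifun (d : ℕ) (J : ℕ → ℝ) (p : ℝ) (ν : ℝ) : ℝ :=
  sInf {x : ℝ | ∃ q, MemL2 d q ∧ mass d q = ν ∧ energy d J p q = x}

/-- The operator `L` applied to a real-valued sequence:
`(Lq)_n = Σ_{m ≠ n} J_{|n-m|} (q_n - q_m)`. -/
def LopR (d : ℕ) (J : ℕ → ℝ) (q : (Fin d → ℤ) → ℝ) (n : Fin d → ℤ) : ℝ :=
  ∑' m : Fin d → ℤ, if m = n then 0 else J (latNorm (n - m)) * (q n - q m)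

section helpers

/-- Squared `ℓ²` norm on an arbitrary index type. -/
def SS {ι : Type*} (f : ι → ℂ) : ℝ := ∑' i, ‖f i‖ ^ 2

lemma SS_nonneg {ι : Type*} (f : ι → ℂ) : 0 ≤ SS f := tsum_nonneg fun _ => by positivity

lemma summable_mul_norm {ι : Type*} {f g : ι → ℂ} (hf : Summable fun i => ‖f i‖ ^ 2)
    (hg : Summable fun i => ‖g i‖ ^ 2) : Summable fun i => ‖f i‖ * ‖g i‖ := by
  refine Summable.of_nonneg_of_le (fun _ => by positivity) (fun i => ?_) (hf.add hg)
  nlinarith [sq_nonneg (‖f i‖ - ‖g i‖), sq_nonneg (‖f i‖), sq_nonneg (‖g i‖)]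

lemma summable_add_sq {ι : Type*} {f g : ι → ℂ} (hf : Summable fun i => ‖f i‖ ^ 2)
    (hg : Summable fun i => ‖g i‖ ^ 2) : Summable fun i => ‖f i + g i‖ ^ 2 := by
  refine Summable.of_nonneg_of_le (fun _ => by positivity) (fun i => ?_)
    ((hf.mul_left 2).add (hg.mul_left 2))
  have := norm_add_le (f i) (g i)
  nlinarith [sq_nonneg (‖f i‖ - ‖g i‖), norm_nonneg (f i + g i), norm_nonneg (f i),
    norm_nonneg (g i)]

lemma weak_tendsto {ι : Type*} {f : ι → ℂ} {r : ℕ → ι → ℂ} {C : ℝ}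
    (hf : Summable fun i => ‖f i‖ ^ 2) (hr : ∀ k, Summable fun i => ‖r k i‖ ^ 2)
    (hC : ∀ k, SS (r k) ≤ C) (h0 : ∀ i, Tendsto (fun k => r k i) atTop (𝓝 0)) :
    Tendsto (fun k => ∑' i, ‖f i‖ * ‖r k i‖) atTop (𝓝 0) := by
  have hC0 : 0 ≤ C := (SS_nonneg _).trans (hC 0)
  rw [Metric.tendsto_atTop]
  intro ε hε
  set η : ℝ := ε / (C + 1) with hη
  have hηp : 0 < η := by positivity
  set a : ℕ → ι → ℝ := fun k i => max 0 (‖f i‖ * ‖r k i‖ - η / 2 * ‖r k i‖ ^ 2) with ha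
  have hab : ∀ k i, ‖a k i‖ ≤ 1 / (2 * η) * ‖f i‖ ^ 2 := by
    intro k i
    rw [Real.norm_of_nonneg (le_max_left _ _)]
    refine max_le (by positivity) ?_
    have h1 : 1 / (2 * η) * ‖f i‖ ^ 2 - (‖f i‖ * ‖r k i‖ - η / 2 * ‖r k i‖ ^ 2)
      = 1 / (2 * η) * (‖f i‖ - η * ‖r k i‖) ^ 2 := by field_simp; ring
    have : 0 ≤ 1 / (2 * η) * (‖f i‖ - η * ‖r k i‖) ^ 2 := by positivity
    linarith
  have hbs : Summable fun i => 1 / (2 * η) * ‖f i‖ ^ 2 := hf.mul_left _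
  have hlim : Tendsto (fun k => ∑' i, a k i) atTop (𝓝 (∑' _ : ι, (0:ℝ))) := by
    refine tendsto_tsum_of_dominated_convergence hbs (fun i => ?_)
      (Eventually.of_forall fun k i => hab k i)
    have hn : Tendsto (fun k => ‖r k i‖) atTop (𝓝 0) := by simpa using (h0 i).norm
    have : Tendsto (fun k => max 0 (‖f i‖ * ‖r k i‖ - η / 2 * ‖r k i‖ ^ 2)) atTop
        (𝓝 (max 0 (‖f i‖ * 0 - η / 2 * 0 ^ 2))) :=
      tendsto_const_nhds.max ((hn.const_mul _).sub ((hn.pow 2).const_mul _))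
    simpa using this
  rw [tsum_zero] at hlim
  obtain ⟨N, hN⟩ := (Metric.tendsto_atTop.1 hlim) (ε / 2) (by positivity)
  refine ⟨N, fun k hk => ?_⟩
  have h1 := hN k hk
  rw [Real.dist_eq, sub_zero] at h1 ⊢
  rw [abs_of_nonneg (tsum_nonneg fun _ => by positivity)]
  have has : Summable (a k) := Summable.of_norm_bounded hbs (hab k)
  have h2 : ∑' i, ‖f i‖ * ‖r k i‖ ≤ ∑' i, (a k i + η / 2 * ‖r k i‖ ^ 2) := by
    refine (summable_mul_norm hf (hr k)).tsum_le_tsum (fun i => ?_)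
      (has.add ((hr k).mul_left _))
    have := le_max_right 0 (‖f i‖ * ‖r k i‖ - η / 2 * ‖r k i‖ ^ 2)
    simp only [ha]; linarith
  rw [has.tsum_add ((hr k).mul_left _), tsum_mul_left] at h2
  have h3 : η / 2 * ∑' i, ‖r k i‖ ^ 2 ≤ η / 2 * C :=
    mul_le_mul_of_nonneg_left (hC k) (by positivity)
  have h4 : η * C ≤ ε := by
    rw [hη, div_mul_eq_mul_div, div_le_iff₀ (by positivity)]; nlinarith
  have h5 := le_abs_self (∑' i, a k i)
  linarith

/-- Real inner product. -/
def IP {ι : Type*} (f g : ι → ℂ) : ℝ := ∑' i, (f i * (starRingEnd ℂ) (g i)).re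

lemma summable_IP {ι : Type*} {f g : ι → ℂ} (hf : Summable fun i => ‖f i‖ ^ 2)
    (hg : Summable fun i => ‖g i‖ ^ 2) :
    Summable fun i => (f i * (starRingEnd ℂ) (g i)).re := by
  refine Summable.of_norm_bounded (summable_mul_norm hf hg) fun i => ?_
  refine (Complex.abs_re_le_norm _).trans ?_
  simp

lemma IP_le {ι : Type*} {f g : ι → ℂ} (hf : Summable fun i => ‖f i‖ ^ 2)
    (hg : Summable fun i => ‖g i‖ ^ 2) : |IP f g| ≤ ∑' i, ‖f i‖ * ‖g i‖ := by
  rw [← Real.norm_eq_abs]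
  refine tsum_of_norm_bounded (summable_mul_norm hf hg).hasSum fun i => ?_
  refine (Complex.abs_re_le_norm _).trans ?_
  simp

lemma SS_add {ι : Type*} {f g : ι → ℂ} (hf : Summable fun i => ‖f i‖ ^ 2)
    (hg : Summable fun i => ‖g i‖ ^ 2) :
    SS (fun i => f i + g i) = SS f + SS g + 2 * IP f g := by
  unfold SS IP
  rw [← tsum_mul_left, ← hf.tsum_add hg, ← (hf.add hg).tsum_add ((summable_IP hf hg).mul_left 2)]
  refine tsum_congr fun i => ?_
  simp only [← Complex.normSq_eq_norm_sq]
  rw [Complex.normSq_add]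

lemma SS_split {ι : Type*} {f : ι → ℂ} {r : ℕ → ι → ℂ} {C : ℝ}
    (hf : Summable fun i => ‖f i‖ ^ 2) (hr : ∀ k, Summable fun i => ‖r k i‖ ^ 2)
    (hC : ∀ k, SS (r k) ≤ C) (h0 : ∀ i, Tendsto (fun k => r k i) atTop (𝓝 0)) :
    Tendsto (fun k => SS (fun i => f i + r k i) - SS f - SS (r k)) atTop (𝓝 0) := by
  have h := (weak_tendsto hf hr hC h0).const_mul 2
  rw [mul_zero] at h
  refine squeeze_zero_norm (fun k => ?_) h
  rw [SS_add hf (hr k), Real.norm_eq_abs]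
  have : SS f + SS (r k) + 2 * IP f (r k) - SS f - SS (r k) = 2 * IP f (r k) := by ring
  rw [this, abs_mul, abs_of_pos (by norm_num : (0:ℝ) < 2)]
  exact mul_le_mul_of_nonneg_left (IP_le hf (hr k)) (by norm_num)

lemma rpow_diff_le {s u v : ℝ} (hs : 1 ≤ s) (hu : 0 ≤ u) (huv : u ≤ v) :
    v ^ s - u ^ s ≤ s * v ^ (s - 1) * (v - u) := by
  rcases eq_or_lt_of_le (hu.trans huv) with h | hv
  · have : u = 0 := le_antisymm (huv.trans h.symm.le) hu
    subst this; subst h; simp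
  have hB := one_add_mul_self_le_rpow_one_add (s := u / v - 1)
    (by have := div_nonneg hu hv.le; linarith) hs
  have e : 1 + (u / v - 1) = u / v := by ring
  rw [e, Real.div_rpow hu hv.le, le_div_iff₀ (by positivity)] at hB
  have e2 : v ^ s = v ^ (s - 1) * v := by
    rw [← Real.rpow_add_one hv.ne']; ring_nf
  have e3 : (1 + s * (u / v - 1)) * v ^ s = v ^ s - s * v ^ (s - 1) * (v - u) := by
    rw [e2]; field_simp; ring
  linarith

lemma bl_aux {s R x y z : ℝ} (hs : 2 < s) (hy : 0 ≤ y) (hyx : y ≤ x) (hxR : x ≤ R)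
    (h1 : z ≤ x + y) (h2 : x - y ≤ z) :
    |z ^ s - x ^ s - y ^ s| ≤ (2 * s * (2 * R) ^ (s - 2) + R ^ (s - 2)) * (x * y) := by
  have hx : 0 ≤ x := hy.trans hyx
  have hR : 0 ≤ R := hx.trans hxR
  have hz : 0 ≤ z := by linarith
  have key : ∀ a b : ℝ, 0 ≤ a → a ≤ b → b - a ≤ y → b ≤ 2 * x →
      b ^ s - a ^ s ≤ 2 * s * (2 * R) ^ (s - 2) * (x * y) := by
    intro a b ha hab hd hb
    have hb0 : 0 ≤ b := ha.trans hab
    refine (rpow_diff_le (by linarith) ha hab).trans ?_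
    have e : b ^ (s - 1) = b ^ (s - 2) * b := by
      rw [← Real.rpow_add_one' hb0 (by linarith)]; ring_nf
    have h3 : b ^ (s - 2) ≤ (2 * R) ^ (s - 2) :=
      Real.rpow_le_rpow hb0 (by linarith) (by linarith)
    have h4 : b ^ (s - 1) ≤ (2 * R) ^ (s - 2) * (2 * x) := by
      rw [e]; exact mul_le_mul h3 hb hb0 (by positivity)
    calc s * b ^ (s - 1) * (b - a) ≤ s * ((2 * R) ^ (s - 2) * (2 * x)) * y := by
          apply mul_le_mul _ hd (by linarith) (by positivity)
          exact mul_le_mul_of_nonneg_left h4 (by linarith)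
      _ = _ := by ring
  have hys : y ^ s ≤ R ^ (s - 2) * (x * y) := by
    have e : y ^ s = y ^ (s - 2) * y ^ (2:ℝ) := by
      rw [← Real.rpow_add' hy (by linarith)]; ring_nf
    rw [e]
    apply mul_le_mul (Real.rpow_le_rpow hy (hyx.trans hxR) (by linarith)) _ (by positivity)
      (by positivity)
    rw [Real.rpow_two]; nlinarith
  have hys0 : 0 ≤ y ^ s := by positivity
  have hR2 : 0 ≤ R ^ (s - 2) * (x * y) := by positivity
  rw [add_mul, abs_le]
  rcases le_total z x with h | h
  · have hk := key z x hz h (by linarith) (by linarith)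
    have := Real.rpow_le_rpow hz h (by linarith : 0 ≤ s)
    constructor <;> linarith
  · have hk := key x z hx h (by linarith) (by linarith)
    have := Real.rpow_le_rpow hx h (by linarith : 0 ≤ s)
    constructor <;> linarith

lemma bl_ineq {s R : ℝ} (hs : 2 < s) (a b : ℂ) (ha : ‖a‖ ≤ R) (hb : ‖b‖ ≤ R) :
    |‖a + b‖ ^ s - ‖a‖ ^ s - ‖b‖ ^ s| ≤
      (2 * s * (2 * R) ^ (s - 2) + R ^ (s - 2)) * (‖a‖ * ‖b‖) := by
  rcases le_total ‖b‖ ‖a‖ with h | h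
  · refine bl_aux hs (norm_nonneg _) h ha (norm_add_le _ _) ?_
    have := norm_sub_norm_le a (-b); simpa using this
  · have := bl_aux hs (norm_nonneg a) h hb (z := ‖a + b‖)
      (by rw [add_comm ‖b‖]; exact norm_add_le _ _)
      (by have := norm_sub_norm_le b (-a); rw [add_comm a b]; simpa using this)
    rw [mul_comm ‖a‖ ‖b‖]
    convert this using 2; ring

lemma norm_le_sqrt {ι : Type*} {f : ι → ℂ} (hf : Summable fun i => ‖f i‖ ^ 2) {ν : ℝ}
    (h : SS f ≤ ν) (i : ι) : ‖f i‖ ≤ √ν := by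
  apply Real.le_sqrt_of_sq_le
  exact (hf.le_tsum i (fun _ _ => by positivity)).trans h

lemma pot_term_le {s R x : ℝ} (hs : 2 < s) (hx : 0 ≤ x) (hR : x ≤ R) :
    x ^ s ≤ R ^ (s - 2) * x ^ 2 := by
  have e : x ^ s = x ^ (s - 2) * x ^ (2:ℝ) := by
    rw [← Real.rpow_add' hx (by linarith)]; ring_nf
  rw [e, Real.rpow_two]
  exact mul_le_mul_of_nonneg_right (Real.rpow_le_rpow hx hR (by linarith)) (by positivity)

lemma summable_pot {ι : Type*} {f : ι → ℂ} (hf : Summable fun i => ‖f i‖ ^ 2) {s : ℝ}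
    (hs : 2 < s) : Summable fun i => ‖f i‖ ^ s := by
  refine Summable.of_nonneg_of_le (fun _ => by positivity)
    (fun i => pot_term_le hs (norm_nonneg _) (norm_le_sqrt hf le_rfl i)) (hf.mul_left _)

lemma pot_le {ι : Type*} {f : ι → ℂ} (hf : Summable fun i => ‖f i‖ ^ 2) {s R : ℝ}
    (hs : 2 < s) (hR : ∀ i, ‖f i‖ ≤ R) : ∑' i, ‖f i‖ ^ s ≤ R ^ (s - 2) * SS f := by
  unfold SS
  rw [← tsum_mul_left]
  exact (summable_pot hf hs).tsum_le_tsum (fun i => pot_term_le hs (norm_nonneg _) (hR i))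
    (hf.mul_left _)

lemma pot_split {ι : Type*} {f : ι → ℂ} {r : ℕ → ι → ℂ} {C s : ℝ} (hs : 2 < s)
    (hf : Summable fun i => ‖f i‖ ^ 2) (hr : ∀ k, Summable fun i => ‖r k i‖ ^ 2)
    (hC : ∀ k, SS (r k) ≤ C) (h0 : ∀ i, Tendsto (fun k => r k i) atTop (𝓝 0)) :
    Tendsto (fun k => (∑' i, ‖f i + r k i‖ ^ s) - (∑' i, ‖f i‖ ^ s) - ∑' i, ‖r k i‖ ^ s)
      atTop (𝓝 0) := by
  set R := max √(SS f) √C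
  have h := (weak_tendsto hf hr hC h0).const_mul (2 * s * (2 * R) ^ (s - 2) + R ^ (s - 2))
  rw [mul_zero] at h
  refine squeeze_zero_norm (fun k => ?_) h
  have s1 := summable_pot (summable_add_sq hf (hr k)) hs
  have s2 := summable_pot hf hs
  have s3 := summable_pot (hr k) hs
  rw [← s1.tsum_sub s2, ← (s1.sub s2).tsum_sub s3, ← tsum_mul_left]
  refine tsum_of_norm_bounded ((summable_mul_norm hf (hr k)).mul_left _).hasSum fun i => ?_
  exact bl_ineq hs _ _ ((norm_le_sqrt hf le_rfl i).trans (le_max_left _ _))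
    ((norm_le_sqrt (hr k) (hC k) i).trans (le_max_right _ _))

end helpers
section lattice

variable {d : ℕ} {J : ℕ → ℝ} {p : ℝ}

lemma latNorm_neg (m : Fin d → ℤ) : latNorm (-m) = latNorm m := by
  simp [latNorm]

lemma Jb_nonneg (hJ : ∀ k, 0 ≤ J k) (m : Fin d → ℤ) : 0 ≤ JbarSummand d J m := by
  unfold JbarSummand; split_ifs; exacts [le_rfl, hJ _]

lemma Jb_symm (n m : Fin d → ℤ) : JbarSummand d J (n - m) = JbarSummand d J (m - n) := by
  have : m - n = -(n - m) := by ring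
  rw [this]
  unfold JbarSummand
  rw [latNorm_neg]
  simp only [neg_eq_zero]

/-- Weighted difference operator. -/
def DD (d : ℕ) (J : ℕ → ℝ) (u : (Fin d → ℤ) → ℂ) (x : (Fin d → ℤ) × (Fin d → ℤ)) : ℂ :=
  (√(JbarSummand d J (x.1 - x.2)) : ℂ) * (u x.1 - u x.2)

lemma DD_sq (hJ : ∀ k, 0 ≤ J k) (u : (Fin d → ℤ) → ℂ) (x : (Fin d → ℤ) × (Fin d → ℤ)) :
    ‖DD d J u x‖ ^ 2 = JbarSummand d J (x.1 - x.2) * ‖u x.1 - u x.2‖ ^ 2 := by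
  unfold DD
  rw [norm_mul, mul_pow, Complex.norm_real, Real.norm_eq_abs, sq_abs,
    Real.sq_sqrt (Jb_nonneg hJ _)]

/-- Shear equivalence. -/
def shear (d : ℕ) : (Fin d → ℤ) × (Fin d → ℤ) ≃ (Fin d → ℤ) × (Fin d → ℤ) where
  toFun x := (x.1 - x.2, x.1)
  invFun y := (y.2, y.2 - y.1)
  left_inv x := by simp
  right_inv y := by simp

lemma sum1 (hJ : ∀ k, 0 ≤ J k) (hJb : Summable (JbarSummand d J)) {f : (Fin d → ℤ) → ℝ}
    (hf : Summable f) (hf0 : ∀ n, 0 ≤ f n) :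
    HasSum (fun x : (Fin d → ℤ) × (Fin d → ℤ) => JbarSummand d J (x.1 - x.2) * f x.1)
      (Jbar d J * ∑' n, f n) := by
  have hs := hJb.mul_of_nonneg hf (Jb_nonneg hJ) hf0
  have := hJb.hasSum.mul hf.hasSum hs
  exact (shear d).hasSum_iff.2 this

lemma sum2 (hJ : ∀ k, 0 ≤ J k) (hJb : Summable (JbarSummand d J)) {f : (Fin d → ℤ) → ℝ}
    (hf : Summable f) (hf0 : ∀ n, 0 ≤ f n) :
    HasSum (fun x : (Fin d → ℤ) × (Fin d → ℤ) => JbarSummand d J (x.1 - x.2) * f x.2)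
      (Jbar d J * ∑' n, f n) := by
  have := (Equiv.prodComm (Fin d → ℤ) (Fin d → ℤ)).hasSum_iff.2 (sum1 hJ hJb hf hf0)
  refine this.congr_fun ?_
  intro x
  simp [Jb_symm x.1 x.2]

lemma DD_le (hJ : ∀ k, 0 ≤ J k) (u : (Fin d → ℤ) → ℂ) (x : (Fin d → ℤ) × (Fin d → ℤ)) :
    ‖DD d J u x‖ ^ 2 ≤ 2 * (JbarSummand d J (x.1 - x.2) * ‖u x.1‖ ^ 2)
      + 2 * (JbarSummand d J (x.1 - x.2) * ‖u x.2‖ ^ 2) := by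
  rw [DD_sq hJ]
  have h := Jb_nonneg hJ (x.1 - x.2)
  have h1 : ‖u x.1 - u x.2‖ ^ 2 ≤ 2 * ‖u x.1‖ ^ 2 + 2 * ‖u x.2‖ ^ 2 := by
    have := norm_sub_le (u x.1) (u x.2)
    nlinarith [sq_nonneg (‖u x.1‖ - ‖u x.2‖), norm_nonneg (u x.1 - u x.2), norm_nonneg (u x.1),
      norm_nonneg (u x.2)]
  have := mul_le_mul_of_nonneg_left h1 h
  linarith

lemma DD_bound (hJ : ∀ k, 0 ≤ J k) (hJb : Summable (JbarSummand d J))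
    {u : (Fin d → ℤ) → ℂ} (hu : MemL2 d u) :
    (Summable fun x => ‖DD d J u x‖ ^ 2) ∧ SS (DD d J u) ≤ 4 * Jbar d J * mass d u := by
  have h1 := (sum1 hJ hJb hu (fun _ => by positivity)).mul_left 2
  have h2 := (sum2 hJ hJb hu (fun _ => by positivity)).mul_left 2
  have h3 := h1.add h2
  have hs : Summable fun x => ‖DD d J u x‖ ^ 2 :=
    Summable.of_nonneg_of_le (fun _ => by positivity) (DD_le hJ u) h3.summable
  refine ⟨hs, ?_⟩
  refine (hasSum_le (DD_le hJ u) hs.hasSum h3).trans (le_of_eq ?_)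
  unfold mass; ring

lemma pairing_eq (hJ : ∀ k, 0 ≤ J k) (hJb : Summable (JbarSummand d J))
    {u : (Fin d → ℤ) → ℂ} (hu : MemL2 d u) : pairing d J u = 1 / 2 * SS (DD d J u) := by
  unfold pairing SS
  rw [(DD_bound hJ hJb hu).1.tsum_prod]
  congr 1
  refine tsum_congr fun n => tsum_congr fun m => ?_
  rw [DD_sq hJ]
  unfold JbarSummand
  by_cases h : m = n
  · simp [h]
  · have h' : n - m ≠ 0 := sub_ne_zero.2 (Ne.symm h)
    simp [h, h']

lemma MemL2.smul {u : (Fin d → ℤ) → ℂ} (hu : MemL2 d u) (c : ℂ) : MemL2 d (fun n => c * u n) := by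
  unfold MemL2
  simp only [norm_mul, mul_pow]
  exact Summable.mul_left _ hu

lemma mass_smul (u : (Fin d → ℤ) → ℂ) (c : ℂ) :
    mass d (fun n => c * u n) = ‖c‖ ^ 2 * mass d u := by
  unfold mass; simp only [norm_mul, mul_pow]; rw [tsum_mul_left]

lemma ppot_smul (u : (Fin d → ℤ) → ℂ) (c : ℂ) :
    ppot d p (fun n => c * u n) = ‖c‖ ^ (p + 1) * ppot d p u := by
  unfold ppot
  rw [← tsum_mul_left]
  refine tsum_congr fun n => ?_
  rw [norm_mul, Real.mul_rpow (norm_nonneg _) (norm_nonneg _)]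

lemma pairing_smul (u : (Fin d → ℤ) → ℂ) (c : ℂ) :
    pairing d J (fun n => c * u n) = ‖c‖ ^ 2 * pairing d J u := by
  unfold pairing
  have : ∀ n m : Fin d → ℤ, (if m = n then 0 else J (latNorm (n - m)) * ‖c * u n - c * u m‖ ^ 2)
      = ‖c‖ ^ 2 * (if m = n then 0 else J (latNorm (n - m)) * ‖u n - u m‖ ^ 2) := by
    intro n m
    rw [← mul_sub, norm_mul, mul_pow]
    split_ifs <;> ring
  simp only [this, tsum_mul_left]
  ring

lemma shift_mem {u : (Fin d → ℤ) → ℂ} (hu : MemL2 d u) (a : Fin d → ℤ) :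
    MemL2 d (fun n => u (n - a)) := (Equiv.subRight a).summable_iff.2 hu

lemma mass_shift (u : (Fin d → ℤ) → ℂ) (a : Fin d → ℤ) :
    mass d (fun n => u (n - a)) = mass d u :=
  (Equiv.subRight a).tsum_eq (fun n => ‖u n‖ ^ 2)

lemma ppot_shift (u : (Fin d → ℤ) → ℂ) (a : Fin d → ℤ) :
    ppot d p (fun n => u (n - a)) = ppot d p u :=
  (Equiv.subRight a).tsum_eq (fun n => ‖u n‖ ^ (p + 1))

lemma pairing_shift (u : (Fin d → ℤ) → ℂ) (a : Fin d → ℤ) :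
    pairing d J (fun n => u (n - a)) = pairing d J u := by
  unfold pairing
  congr 1
  rw [← (Equiv.subRight a).tsum_eq (fun n => ∑' m : Fin d → ℤ,
    if m = n then 0 else J (latNorm (n - m)) * ‖u n - u m‖ ^ 2)]
  refine tsum_congr fun n => ?_
  rw [← (Equiv.subRight a).tsum_eq (fun m => 
    if m = Equiv.subRight a n then 0 else
      J (latNorm (Equiv.subRight a n - m)) * ‖u (Equiv.subRight a n) - u m‖ ^ 2)]
  refine tsum_congr fun m => ?_
  simp

lemma pairing_nonneg (hJ : ∀ k, 0 ≤ J k) (u : (Fin d → ℤ) → ℂ) : 0 ≤ pairing d J u := by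
  unfold pairing
  refine mul_nonneg (by norm_num) (tsum_nonneg fun n => tsum_nonneg fun m => ?_)
  split_ifs
  · exact le_rfl
  · exact mul_nonneg (hJ _) (by positivity)

lemma ppot_nonneg (u : (Fin d → ℤ) → ℂ) : 0 ≤ ppot d p u :=
  tsum_nonneg fun _ => by positivity

lemma ppot_pos (hp : 1 < p) {u : (Fin d → ℤ) → ℂ} (hu : MemL2 d u) {n : Fin d → ℤ}
    (hn : u n ≠ 0) : 0 < ppot d p u := by
  refine (summable_pot hu (by linarith)).tsum_pos (fun _ => by positivity) n ?_
  have := norm_pos_iff.2 hn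
  positivity

lemma mass_pos {u : (Fin d → ℤ) → ℂ} (hu : MemL2 d u) {n : Fin d → ℤ}
    (hn : u n ≠ 0) : 0 < mass d u := by
  refine Summable.tsum_pos hu (fun _ => by positivity) n ?_
  have := norm_pos_iff.2 hn
  positivity

lemma exists_ne_of_mass {u : (Fin d → ℤ) → ℂ} (h : mass d u ≠ 0) : ∃ n, u n ≠ 0 := by
  by_contra! hc
  apply h
  simp [mass, hc]

lemma Ifun_le (hJ : ∀ k, 0 ≤ J k) (hp : 1 < p) {ν : ℝ} {u : (Fin d → ℤ) → ℂ}
    (hu : MemL2 d u) (hm : mass d u = ν) : Ifun d J p ν ≤ energy d J p u := by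
  refine csInf_le ⟨-(1 / (p + 1) * ((√ν) ^ (p + 1 - 2) * ν)), ?_⟩ ⟨u, hu, hm, rfl⟩
  rintro x ⟨v, hv, hvm, rfl⟩
  have h1 := pairing_nonneg hJ v
  have h2 : ppot d p v ≤ (√ν) ^ (p + 1 - 2) * ν := by
    have := pot_le hv (by linarith : 2 < p + 1) (norm_le_sqrt hv (le_of_eq hvm))
    have e : SS v = ν := hvm
    rwa [e] at this
  have h3 := mul_le_mul_of_nonneg_left h2 (by positivity : 0 ≤ 1 / (p + 1))
  unfold energy
  linarith

lemma key_scale (hJ : ∀ k, 0 ≤ J k) (hp : 1 < p) {ν : ℝ} (hν : 0 < ν) {u : (Fin d → ℤ) → ℂ}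
    (hu : MemL2 d u) (hm : 0 < mass d u) :
    Ifun d J p ν ≤ (ν / mass d u) * ((1 / 2) * pairing d J u)
      - (ν / mass d u) ^ ((p + 1) / 2) * ((1 / (p + 1)) * ppot d p u) := by
  set θ := ν / mass d u with hθ
  have hθp : 0 < θ := by positivity
  have hc : ‖((√θ : ℝ) : ℂ)‖ = √θ := by
    rw [Complex.norm_real, Real.norm_of_nonneg (Real.sqrt_nonneg _)]
  have h := Ifun_le (J := J) hJ hp (hu.smul ((√θ : ℝ) : ℂ)) (ν := ν) (by
    rw [mass_smul, hc, Real.sq_sqrt hθp.le, hθ]; field_simp)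
  unfold energy at h
  rw [pairing_smul, ppot_smul, hc, Real.sq_sqrt hθp.le] at h
  have e : (√θ) ^ (p + 1) = θ ^ ((p + 1) / 2) := by
    rw [Real.sqrt_eq_rpow, ← Real.rpow_mul hθp.le]; ring_nf
  rw [e] at h
  linarith

/-- Lower energy bound with a gain. -/
lemma key_lower (hJ : ∀ k, 0 ≤ J k) (hp : 1 < p) {ν : ℝ} (hν : 0 < ν) {u : (Fin d → ℤ) → ℂ}
    (hu : MemL2 d u) (hm : 0 < mass d u) :
    mass d u / ν * Ifun d J p ν
      + ((ν / mass d u) ^ ((p - 1) / 2) - 1) * ((1 / (p + 1)) * ppot d p u) ≤ energy d J p u := by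
  have h := key_scale hJ hp hν hu hm
  set θ := ν / mass d u with hθ
  have hθp : 0 < θ := by positivity
  have e : mass d u / ν = θ⁻¹ := by rw [hθ, inv_div]
  have e2 : θ ^ ((p + 1) / 2) = θ * θ ^ ((p - 1) / 2) := by
    rw [← Real.rpow_one_add' hθp.le (by linarith)]; ring_nf
  rw [e2] at h
  rw [e]
  have h2 := mul_le_mul_of_nonneg_left h (inv_nonneg.2 hθp.le)
  have e3 : θ⁻¹ * (θ * (1 / 2 * pairing d J u)
      - θ * θ ^ ((p - 1) / 2) * (1 / (p + 1) * ppot d p u)) = 1 / 2 * pairing d J u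
      - θ ^ ((p - 1) / 2) * (1 / (p + 1) * ppot d p u) := by field_simp
  rw [e3] at h2
  unfold energy
  linarith

lemma key_lower' (hJ : ∀ k, 0 ≤ J k) (hp : 1 < p) {ν : ℝ} (hν : 0 < ν) {u : (Fin d → ℤ) → ℂ}
    (hu : MemL2 d u) (hm : mass d u ≤ ν) :
    mass d u / ν * Ifun d J p ν ≤ energy d J p u := by
  have h0 : 0 ≤ mass d u := SS_nonneg u
  rcases h0.eq_or_lt with h | h
  · have hz : ∀ n, u n = 0 := by
      intro n; by_contra hn; exact (mass_pos hu hn).ne h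
    rw [← h]
    have : p + 1 ≠ 0 := by linarith
    simp [energy, pairing, ppot, hz, Real.zero_rpow this]
  · have := key_lower (J := J) hJ hp hν hu h
    have h1 : 1 ≤ (ν / mass d u) ^ ((p - 1) / 2) :=
      Real.one_le_rpow ((one_le_div h).2 hm) (by linarith)
    have h2 : 0 ≤ ((ν / mass d u) ^ ((p - 1) / 2) - 1) * ((1 / (p + 1)) * ppot d p u) :=
      mul_nonneg (by linarith) (mul_nonneg (by positivity) (ppot_nonneg u))
    linarith

lemma gain_pos (hp : 1 < p) {ν : ℝ} {u : (Fin d → ℤ) → ℂ}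
    (hu : MemL2 d u) (hm : 0 < mass d u) (hm2 : mass d u < ν) :
    0 < ((ν / mass d u) ^ ((p - 1) / 2) - 1) * ((1 / (p + 1)) * ppot d p u) := by
  obtain ⟨n, hn⟩ := exists_ne_of_mass hm.ne'
  have := ppot_pos (p := p) hp hu hn
  have h1 : 1 < (ν / mass d u) ^ ((p - 1) / 2) :=
    Real.one_lt_rpow ((one_lt_div hm).2 hm2) (by linarith)
  have : 0 < (ν / mass d u) ^ ((p - 1) / 2) - 1 := by linarith
  positivity

end lattice
section main

variable {d : ℕ} {J : ℕ → ℝ} {p : ℝ}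

lemma DD_tendsto {r : ℕ → (Fin d → ℤ) → ℂ} (h0 : ∀ i, Tendsto (fun k => r k i) atTop (𝓝 0))
    (x : (Fin d → ℤ) × (Fin d → ℤ)) : Tendsto (fun k => DD d J (r k) x) atTop (𝓝 0) := by
  have := ((h0 x.1).sub (h0 x.2)).const_mul (√(JbarSummand d J (x.1 - x.2)) : ℂ)
  simpa [DD] using this

lemma DD_add (u v : (Fin d → ℤ) → ℂ) (x : (Fin d → ℤ) × (Fin d → ℤ)) :
    DD d J (fun n => u n + v n) x = DD d J u x + DD d J v x := by
  unfold DD; ring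

lemma compact_limit (hJ : ∀ k, 0 ≤ J k) (hJb : Summable (JbarSummand d J)) (hp : 1 < p)
    {ν : ℝ} (hν : 0 < ν) {v : ℕ → (Fin d → ℤ) → ℂ} {Q : (Fin d → ℤ) → ℂ}
    (hv : ∀ k, MemL2 d (v k)) (hvm : ∀ k, mass d (v k) = ν)
    (hE : Tendsto (fun k => energy d J p (v k)) atTop (𝓝 (Ifun d J p ν)))
    (hlim : ∀ n, Tendsto (fun k => v k n) atTop (𝓝 (Q n))) (hQ0 : Q 0 ≠ 0) :
    MemL2 d Q ∧ mass d Q = ν ∧ energy d J p Q = Ifun d J p ν ∧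
      Tendsto (fun k => ∑' n, ‖v k n - Q n‖ ^ 2) atTop (𝓝 0) := by
  have hfin : ∀ s : Finset (Fin d → ℤ), ∑ n ∈ s, ‖Q n‖ ^ 2 ≤ ν := by
    intro s
    have ht : Tendsto (fun k => ∑ n ∈ s, ‖v k n‖ ^ 2) atTop (𝓝 (∑ n ∈ s, ‖Q n‖ ^ 2)) :=
      tendsto_finsetSum _ fun n _ => (hlim n).norm.pow 2
    refine le_of_tendsto' ht fun k => ?_
    rw [← hvm k]
    exact (hv k).sum_le_tsum s (fun _ _ => by positivity)
  have hQ : MemL2 d Q := summable_of_sum_le (fun _ => by positivity) hfin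
  have hQm : mass d Q ≤ ν := hQ.tsum_le_of_sum_le hfin
  have hQp : 0 < mass d Q := mass_pos hQ hQ0
  set r : ℕ → (Fin d → ℤ) → ℂ := fun k n => v k n - Q n with hrdef
  have hQr : ∀ k, (fun n => Q n + r k n) = v k := by intro k; ext n; simp [hrdef]
  have hle : ∀ k n, ‖r k n‖ ^ 2 ≤ 2 * ‖v k n‖ ^ 2 + 2 * ‖Q n‖ ^ 2 := by
    intro k n
    have := norm_sub_le (v k n) (Q n)
    nlinarith [sq_nonneg (‖v k n‖ - ‖Q n‖), norm_nonneg (v k n - Q n), norm_nonneg (v k n),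
      norm_nonneg (Q n)]
  have hbs : ∀ k, HasSum (fun n => 2 * ‖v k n‖ ^ 2 + 2 * ‖Q n‖ ^ 2)
      (2 * mass d (v k) + 2 * mass d Q) := fun k =>
    ((hv k).hasSum.mul_left 2).add (hQ.hasSum.mul_left 2)
  have hr : ∀ k, MemL2 d (r k) := fun k =>
    Summable.of_nonneg_of_le (fun _ => by positivity) (hle k) (hbs k).summable
  have hrC : ∀ k, SS (r k) ≤ 4 * ν := by
    intro k
    have := hasSum_le (hle k) (hr k).hasSum (hbs k)
    rw [hvm] at this
    unfold SS; linarith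
  have h0 : ∀ n, Tendsto (fun k => r k n) atTop (𝓝 0) := by
    intro n; simpa [hrdef] using (hlim n).sub_const (Q n)
  have hJ0 : 0 ≤ Jbar d J := tsum_nonneg (Jb_nonneg hJ)
  -- splitting
  have sM := SS_split hQ hr hrC h0
  have sP := SS_split (DD_bound hJ hJb hQ).1 (fun k => (DD_bound hJ hJb (hr k)).1)
    (fun k => (DD_bound hJ hJb (hr k)).2.trans
      (mul_le_mul_of_nonneg_left (hrC k) (by positivity))) (DD_tendsto (J := J) h0)
  have sV := pot_split (by linarith : 2 < p + 1) hQ hr hrC h0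
  have hMr : Tendsto (fun k => mass d (r k)) atTop (𝓝 (ν - mass d Q)) := by
    have : ∀ k, mass d (r k) = ν - mass d Q - (SS (fun i => Q i + r k i) - SS Q - SS (r k)) := by
      intro k
      rw [hQr, ← hvm k]; unfold mass SS; ring
    simp only [this]
    simpa using sM.const_sub (ν - mass d Q)
  have hEr : Tendsto (fun k => energy d J p (r k)) atTop
      (𝓝 (Ifun d J p ν - energy d J p Q)) := by
    have : ∀ k, energy d J p (r k) = energy d J p (v k) - energy d J p Q
        - (1 / 4) * (SS (fun x => DD d J Q x + DD d J (r k) x) - SS (DD d J Q)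
            - SS (DD d J (r k)))
        + (1 / (p + 1)) * ((∑' i, ‖Q i + r k i‖ ^ (p + 1)) - (∑' i, ‖Q i‖ ^ (p + 1))
            - ∑' i, ‖r k i‖ ^ (p + 1)) := by
      intro k
      have e1 : (fun x => DD d J Q x + DD d J (r k) x) = DD d J (v k) := by
        rw [← hQr k]; ext x; rw [DD_add]
      have e2 : (∑' i, ‖Q i + r k i‖ ^ (p + 1)) = ppot d p (v k) := by
        rw [← hQr k]; rfl
      rw [e1, e2]
      unfold energy
      rw [pairing_eq hJ hJb (hr k), pairing_eq hJ hJb (hv k), pairing_eq hJ hJb hQ]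
      unfold ppot
      ring
    simp only [this]
    have := ((hE.sub_const (energy d J p Q)).sub (sP.const_mul (1 / 4))).add
      (sV.const_mul (1 / (p + 1)))
    simpa using this
  have hev : ∀ᶠ k in atTop, mass d (r k) / ν * Ifun d J p ν ≤ energy d J p (r k) := by
    filter_upwards [hMr.eventually (gt_mem_nhds (by linarith : ν - mass d Q < ν))] with k hk
    exact key_lower' hJ hp hν (hr k) hk.le
  have hineq := le_of_tendsto_of_tendsto ((hMr.div_const ν).mul_const (Ifun d J p ν)) hEr hev
  have e : (ν - mass d Q) / ν * Ifun d J p ν = Ifun d J p ν - mass d Q / ν * Ifun d J p ν := by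
    field_simp
  rw [e] at hineq
  have hmass : mass d Q = ν := by
    by_contra hne
    have h1 := gain_pos hp hQ hQp (lt_of_le_of_ne hQm hne)
    have h2 := key_lower (J := J) hJ hp hν hQ hQp
    linarith
  refine ⟨hQ, hmass, ?_, ?_⟩
  · apply le_antisymm _ (Ifun_le hJ hp hQ hmass)
    rw [hmass, div_self hν.ne'] at hineq
    linarith
  · rw [hmass, sub_self] at hMr
    exact hMr

lemma Lop_hasSum (hJ : ∀ k, 0 ≤ J k) (hJb : Summable (JbarSummand d J)) {g : (Fin d → ℤ) → ℝ}
    (hg : MemL2 d (fun n => (g n : ℂ))) (n : Fin d → ℤ) :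
    HasSum (fun m => JbarSummand d J (n - m) * (g n - g m)) (LopR d J g n) := by
  have hK : Summable fun m => JbarSummand d J (n - m) := by
    have := (Equiv.subLeft n).summable_iff (f := JbarSummand d J)
    exact this.2 hJb
  have hs : Summable fun m => JbarSummand d J (n - m) * (g n - g m) := by
    refine Summable.of_norm_bounded (hK.mul_right (2 * √(mass d (fun n => (g n : ℂ))))) ?_
    intro m
    rw [norm_mul, Real.norm_of_nonneg (Jb_nonneg hJ _)]
    refine mul_le_mul_of_nonneg_left ?_ (Jb_nonneg hJ _)
    have h1 := norm_le_sqrt hg (le_refl (mass d (fun n => (g n : ℂ)))) n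
    have h2 := norm_le_sqrt hg (le_refl (mass d (fun n => (g n : ℂ)))) m
    rw [Complex.norm_real] at h1 h2
    exact (norm_sub_le _ _).trans (by linarith)
  convert hs.hasSum using 1
  unfold LopR
  refine tsum_congr fun m => ?_
  unfold JbarSummand
  by_cases h : m = n
  · simp [h]
  · have h' : n - m ≠ 0 := sub_ne_zero.2 (Ne.symm h)
    simp [h, h']

lemma IP_DD_single (hJ : ∀ k, 0 ≤ J k) (hJb : Summable (JbarSummand d J)) {g : (Fin d → ℤ) → ℝ}
    (hg : MemL2 d (fun n => (g n : ℂ))) (n : Fin d → ℤ) :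
    IP (DD d J (fun n => (g n : ℂ))) (DD d J (fun m => if m = n then 1 else 0))
      = 2 * LopR d J g n := by
  have hL := Lop_hasSum hJ hJb hg n
  let F : (Fin d → ℤ) × (Fin d → ℤ) → ℝ := fun x =>
    if x.1 = n then JbarSummand d J (n - x.2) * (g n - g x.2) else 0
  have hF : HasSum F (LopR d J g n) := by
    have hinj : Function.Injective (fun m : Fin d → ℤ => (n, m)) := fun a b h => (Prod.mk.inj h).2
    refine (hinj.hasSum_iff ?_).1 ?_
    · rintro ⟨a, b⟩ hx
      have : a ≠ n := by
        rintro rfl; exact hx ⟨b, rfl⟩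
      simp [F, this]
    · refine hL.congr_fun ?_
      intro m; simp [F]
  have hF2 := (Equiv.prodComm (Fin d → ℤ) (Fin d → ℤ)).hasSum_iff.2 hF
  have hFF := hF.add hF2
  rw [two_mul, ← hFF.tsum_eq]
  unfold IP
  refine tsum_congr ?_
  rintro ⟨a, b⟩
  have e : (DD d J (fun n => (g n : ℂ)) (a, b) *
      (starRingEnd ℂ) (DD d J (fun m => if m = n then 1 else 0) (a, b))).re
      = JbarSummand d J (a - b) * ((g a - g b) *
        ((if a = n then 1 else 0) - (if b = n then 1 else 0))) := by
    have hsq := Real.mul_self_sqrt (Jb_nonneg hJ (a - b))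
    have : DD d J (fun n => (g n : ℂ)) (a, b) *
      (starRingEnd ℂ) (DD d J (fun m => if m = n then 1 else 0) (a, b))
      = ((√(JbarSummand d J (a - b)) * √(JbarSummand d J (a - b)) * ((g a - g b) *
        ((if a = n then 1 else 0) - (if b = n then 1 else 0))) : ℝ) : ℂ) := by
      unfold DD
      simp only [map_mul, map_sub, Complex.conj_ofReal]
      split_ifs <;> push_cast <;> simp <;> ring
    rw [this, Complex.ofReal_re, hsq]
  rw [e]
  simp only [F, Function.comp, Equiv.prodComm_apply, Prod.fst_swap, Prod.snd_swap]
  by_cases ha : a = n <;> by_cases hb : b = n <;> simp [ha, hb]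
  exact Or.inl (Jb_symm a n)

lemma euler_lagrange (hJ : ∀ k, 0 ≤ J k) (hJb : Summable (JbarSummand d J)) (hp : 1 < p)
    {ν : ℝ} (hν : 0 < ν) {g : (Fin d → ℤ) → ℝ} (hg0 : ∀ n, 0 ≤ g n)
    (hg : MemL2 d (fun n => (g n : ℂ))) (hm : mass d (fun n => (g n : ℂ)) = ν)
    (hE : energy d J p (fun n => (g n : ℂ)) = Ifun d J p ν) (n : Fin d → ℤ) :
    -((ppot d p (fun n => (g n : ℂ)) - pairing d J (fun n => (g n : ℂ))) / ν) * g n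
      = LopR d J g n - g n ^ p := by
  set G : (Fin d → ℤ) → ℂ := fun n => (g n : ℂ) with hG
  set δ : (Fin d → ℤ) → ℂ := fun m => if m = n then 1 else 0 with hδ
  have hδs : MemL2 d δ := by
    refine summable_of_ne_finset_zero (s := {n}) ?_
    intro b hb
    have : b ≠ n := by simpa using hb
    simp [hδ, this]
  set W : ℝ → (Fin d → ℤ) → ℂ := fun t m => G m + (t : ℂ) * δ m with hW
  have hWs : ∀ t, MemL2 d (W t) := fun t => summable_add_sq hg (hδs.smul (t : ℂ))
  have hterm : ∀ t m, ‖W t m‖ = if m = n then |g n + t| else g m := by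
    intro t m
    by_cases h : m = n
    · simp only [hW, hG, hδ, h, if_true, mul_one]
      rw [← Complex.ofReal_add, Complex.norm_real, Real.norm_eq_abs]
    · simp [hW, hG, hδ, h, abs_of_nonneg (hg0 m)]
  have hGn : ∀ m, ‖G m‖ = g m := by intro m; simp [hG, abs_of_nonneg (hg0 m)]
  have hWm : ∀ t, mass d (W t) = ν + 2 * t * g n + t ^ 2 := by
    intro t
    have : ∀ m, ‖W t m‖ ^ 2 = ‖G m‖ ^ 2 + (if m = n then 2 * t * g n + t ^ 2 else 0) := by
      intro m; rw [hterm, hGn]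
      split_ifs with h
      · rw [sq_abs, h]; ring
      · ring
    unfold mass
    simp only [this]
    rw [Summable.tsum_add hg (hasSum_ite_eq n _).summable, tsum_ite_eq]
    rw [← hm]; unfold mass; ring
  have hWp : ∀ t, ppot d p (W t) = ppot d p G - g n ^ (p + 1) + |g n + t| ^ (p + 1) := by
    intro t
    have : ∀ m, ‖W t m‖ ^ (p + 1) = ‖G m‖ ^ (p + 1) +
        (if m = n then |g n + t| ^ (p + 1) - g n ^ (p + 1) else 0) := by
      intro m; rw [hterm, hGn]
      split_ifs with h
      · rw [h]; ring
      · ring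
    unfold ppot
    simp only [this]
    rw [Summable.tsum_add (summable_pot hg (by linarith)) (hasSum_ite_eq n _).summable,
      tsum_ite_eq]
    ring
  have hWP : ∀ t, pairing d J (W t) = pairing d J G + 2 * t * LopR d J g n
      + t ^ 2 * pairing d J δ := by
    intro t
    rw [pairing_eq hJ hJb (hWs t), pairing_eq hJ hJb hg, pairing_eq hJ hJb hδs]
    have e : DD d J (W t) = fun x => DD d J G x + DD d J (fun m => (t : ℂ) * δ m) x := by
      ext x; simp only [hW]; rw [DD_add]
    have e2 : ∀ x, DD d J (fun m => (t : ℂ) * δ m) x = t * DD d J δ x := by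
      intro x; unfold DD; ring
    have e3 : SS (DD d J (fun m => (t : ℂ) * δ m)) = t ^ 2 * SS (DD d J δ) := by
      unfold SS; rw [← tsum_mul_left]; refine tsum_congr fun x => ?_
      rw [e2, norm_mul, mul_pow, Complex.norm_real, Real.norm_eq_abs, sq_abs]
    have e4 : IP (DD d J G) (DD d J (fun m => (t : ℂ) * δ m)) = t * IP (DD d J G) (DD d J δ) := by
      unfold IP; rw [← tsum_mul_left]; refine tsum_congr fun x => ?_
      rw [e2, map_mul, Complex.conj_ofReal, mul_left_comm, Complex.re_ofReal_mul]
    rw [e, SS_add (DD_bound hJ hJb hg).1 (DD_bound hJ hJb (hδs.smul (t : ℂ))).1, e3, e4,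
      IP_DD_single hJ hJb hg n]
    ring
  set P := pairing d J G
  set V := ppot d p G
  set Λ := LopR d J g n
  set B := pairing d J δ
  let Φ : ℝ → ℝ := fun t => (ν / (ν + 2 * t * g n + t ^ 2)) *
      ((1 / 2) * (P + 2 * t * Λ + t ^ 2 * B))
      - (ν / (ν + 2 * t * g n + t ^ 2)) ^ ((p + 1) / 2) *
        ((1 / (p + 1)) * (V - g n ^ (p + 1) + |g n + t| ^ (p + 1)))
  have hΦ0 : Φ 0 = Ifun d J p ν := by
    rw [← hE]
    simp only [Φ, energy]
    simp [hν.ne', abs_of_nonneg (hg0 n)]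
    rfl
  have hmin : IsLocalMin Φ 0 := by
    have hc : ContinuousAt (fun t : ℝ => ν + 2 * t * g n + t ^ 2) 0 := by fun_prop
    have : ∀ᶠ t in 𝓝 (0:ℝ), 0 < ν + 2 * t * g n + t ^ 2 :=
      hc.eventually (lt_mem_nhds (by simpa using hν))
    filter_upwards [this] with t ht
    rw [hΦ0]
    have h := key_scale hJ hp hν (hWs t) (by rw [hWm]; exact ht) (J := J)
    rw [hWm, hWp, hWP] at h
    exact h
  have hid := hasDerivAt_id' (0:ℝ)
  have dm : HasDerivAt (fun t : ℝ => ν + 2 * t * g n + t ^ 2) (2 * g n) 0 := by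
    have := (((hid.const_mul 2).mul_const (g n)).const_add ν).add (hid.pow 2)
    refine this.congr_deriv ?_
    simp
  have dq : HasDerivAt (fun t : ℝ => ν / (ν + 2 * t * g n + t ^ 2)) (-(2 * g n) / ν) 0 := by
    have := (hasDerivAt_const (0:ℝ) ν).div dm (by simpa using hν.ne')
    refine this.congr_deriv ?_
    simp
    field_simp
  have dP : HasDerivAt (fun t : ℝ => (1 / 2) * (P + 2 * t * Λ + t ^ 2 * B)) Λ 0 := by
    have := (((((hid.const_mul 2).mul_const Λ).const_add P).add
      ((hid.pow 2).mul_const B))).const_mul (1 / 2)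
    refine this.congr_deriv ?_
    simp
  have dr : HasDerivAt (fun t : ℝ => (ν / (ν + 2 * t * g n + t ^ 2)) ^ ((p + 1) / 2))
      (-((p + 1) * g n) / ν) 0 := by
    have := dq.rpow_const (p := (p + 1) / 2) (Or.inl (by simp [hν.ne']))
    refine this.congr_deriv ?_
    simp [hν.ne']
    field_simp
  have dv : HasDerivAt (fun t : ℝ => (1 / (p + 1)) * (V - g n ^ (p + 1) + |g n + t| ^ (p + 1)))
      (g n ^ p) 0 := by
    have h1 := hasDerivAt_abs_rpow (g n + 0) (by linarith : 1 < p + 1)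
    have h2 := (h1.comp (0:ℝ) (hid.const_add (g n))).const_add (V - g n ^ (p + 1))
    have h3 := h2.const_mul (1 / (p + 1))
    refine h3.congr_deriv ?_
    have hp1 : p + 1 ≠ 0 := by linarith
    rw [add_zero, abs_of_nonneg (hg0 n)]
    have : g n ^ p = g n ^ (p + 1 - 2) * g n := by
      rw [← Real.rpow_add_one' (hg0 n) (by linarith)]; ring_nf
    rw [this]; field_simp
  have hd := (dq.mul dP).sub (dr.mul dv)
  have hz := hmin.hasDerivAt_eq_zero hd
  simp [hν.ne', abs_of_nonneg (hg0 n)] at hz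
  have hp1 : p + 1 ≠ 0 := by linarith
  field_simp at hz ⊢
  linarith

end main
section final

variable {d : ℕ} {J : ℕ → ℝ} {p : ℝ}

lemma omega_pos (hp : 1 < p) {ν : ℝ} (hν : 0 < ν) (hI : Ifun d J p ν < 0)
    {u : (Fin d → ℤ) → ℂ} (hE : energy d J p u = Ifun d J p ν) :
    0 < (ppot d p u - pairing d J u) / ν := by
  apply div_pos _ hν
  have h : energy d J p u < 0 := by rw [hE]; exact hI
  unfold energy at h
  have h1 : 1 / (p + 1) ≤ 1 / 2 := one_div_le_one_div_of_le (by norm_num) (by linarith)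
  have h2 := mul_le_mul_of_nonneg_right h1 (ppot_nonneg (p := p) u)
  linarith

lemma positivity_limit (hJ : ∀ k, 0 ≤ J k) (hJb : Summable (JbarSummand d J)) (hp : 1 < p)
    {ν : ℝ} (hν : 0 < ν) {Q : (Fin d → ℤ) → ℂ}
    (hQ : MemL2 d Q) (hm : mass d Q = ν) (hE : energy d J p Q = Ifun d J p ν)
    (hQ0 : Q 0 ≠ 0) (hQ0' : Q 0 = (‖Q 0‖ : ℂ)) : ∀ n, Q n = (‖Q n‖ : ℂ) := by
  set g : (Fin d → ℤ) → ℝ := fun n => ‖Q n‖ with hg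
  have hg0 : ∀ n, 0 ≤ g n := fun n => norm_nonneg _
  have hnn : ∀ n, ‖((g n : ℝ) : ℂ)‖ = ‖Q n‖ := by intro n; simp [hg]
  have hgs : MemL2 d (fun n => (g n : ℂ)) := by
    unfold MemL2; simp only [hnn]; exact hQ
  have hgm : mass d (fun n => (g n : ℂ)) = ν := by
    rw [← hm]; unfold mass; simp only [hnn]
  have hgp : ppot d p (fun n => (g n : ℂ)) = ppot d p Q := by
    unfold ppot; simp only [hnn]
  have hterm : ∀ x, ‖DD d J (fun n => (g n : ℂ)) x‖ ^ 2 ≤ ‖DD d J Q x‖ ^ 2 := by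
    intro x
    rw [DD_sq hJ, DD_sq hJ]
    refine mul_le_mul_of_nonneg_left ?_ (Jb_nonneg hJ _)
    rw [← Complex.ofReal_sub, Complex.norm_real, Real.norm_eq_abs]
    exact pow_le_pow_left₀ (abs_nonneg _) (abs_norm_sub_norm_le _ _) 2
  have s1 := (DD_bound hJ hJb hgs).1
  have s2 := (DD_bound hJ hJb hQ).1
  have hSle : SS (DD d J (fun n => (g n : ℂ))) ≤ SS (DD d J Q) := s1.tsum_le_tsum hterm s2
  have hIle := Ifun_le (J := J) hJ hp hgs hgm
  have hSeq : SS (DD d J (fun n => (g n : ℂ))) = SS (DD d J Q) := by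
    apply le_antisymm hSle
    rw [← hE] at hIle
    unfold energy at hIle
    rw [hgp, pairing_eq hJ hJb hgs, pairing_eq hJ hJb hQ] at hIle
    linarith
  have hgE : energy d J p (fun n => (g n : ℂ)) = Ifun d J p ν := by
    rw [← hE]; unfold energy
    rw [hgp, pairing_eq hJ hJb hgs, pairing_eq hJ hJb hQ, hSeq]
  have hteq : ∀ x, ‖DD d J (fun n => (g n : ℂ)) x‖ ^ 2 = ‖DD d J Q x‖ ^ 2 := by
    intro x
    by_contra hne
    have := Summable.tsum_lt_tsum (i := x) hterm (lt_of_le_of_ne (hterm x) hne) s1 s2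
    exact this.ne hSeq
  have hEL := euler_lagrange hJ hJb hp hν hg0 hgs hgm hgE
  set A : Set (Fin d → ℤ) := {n | Q n ≠ 0 ∧ Q n = (g n : ℂ)} with hA
  have hedge : ∀ a b, a ∈ A → 0 < JbarSummand d J (a - b) → b ∈ A := by
    rintro a b ⟨ha0, ha⟩ hK
    have hga : 0 < g a := norm_pos_iff.2 ha0
    have hgb : Q b ≠ 0 := by
      intro hb
      have hb' : g b = 0 := by simp [hg, hb]
      have h := hEL b
      rw [hb', Real.zero_rpow (by linarith), mul_zero, sub_zero] at h
      have hL := (Lop_hasSum hJ hJb hgs b).neg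
      have hle : ∀ m, 0 ≤ -(JbarSummand d J (b - m) * (g b - g m)) := by
        intro m
        rw [hb', zero_sub, mul_neg, neg_neg]
        exact mul_nonneg (Jb_nonneg hJ _) (hg0 m)
      have h3 := le_hasSum hL a (fun m _ => hle m)
      rw [← h, hb', Jb_symm b a] at h3
      have : 0 < JbarSummand d J (a - b) * g a := mul_pos hK hga
      linarith
    refine ⟨hgb, ?_⟩
    have h := hteq (a, b)
    rw [DD_sq hJ, DD_sq hJ] at h
    have h2 := mul_left_cancel₀ hK.ne' h
    simp only [] at h2
    rw [ha, ← Complex.normSq_eq_norm_sq, ← Complex.normSq_eq_norm_sq, Complex.normSq_apply,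
      Complex.normSq_apply] at h2
    simp at h2
    have h4 : g b ^ 2 = (Q b).re * (Q b).re + (Q b).im * (Q b).im := by
      rw [← Complex.normSq_apply, Complex.normSq_eq_norm_sq]
    have h5 : g a * (Q b).re = g a * g b := by nlinarith
    have h6 : (Q b).re = g b := mul_left_cancel₀ hga.ne' h5
    have h7 : (Q b).im = 0 := by
      rw [h6] at h4
      have : (Q b).im * (Q b).im = 0 := by nlinarith
      exact mul_self_eq_zero.1 this
    apply Complex.ext <;> simp [h6, h7]
  have hcross : ∀ a b, a ∈ A → b ∉ A → JbarSummand d J (a - b) = 0 := by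
    intro a b ha hb
    by_contra hne
    exact hb (hedge a b ha (lt_of_le_of_ne (Jb_nonneg hJ _) (Ne.symm hne)))
  classical
  set u : (Fin d → ℤ) → ℂ := fun n => if n ∈ A then Q n else 0 with hu
  set v : (Fin d → ℤ) → ℂ := fun n => if n ∈ A then 0 else Q n with hv
  have hus : MemL2 d u := by
    refine Summable.of_nonneg_of_le (fun _ => by positivity) (fun n => ?_) hQ
    simp only [hu]; split_ifs
    · exact le_rfl
    · simp
  have hvs : MemL2 d v := by
    refine Summable.of_nonneg_of_le (fun _ => by positivity) (fun n => ?_) hQ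
    simp only [hv]; split_ifs
    · simp
    · exact le_rfl
  have hM : mass d u + mass d v = ν := by
    rw [← hm]
    unfold mass
    rw [← Summable.tsum_add hus hvs]
    refine tsum_congr fun n => ?_
    simp only [hu, hv]; split_ifs <;> simp
  have hV : ppot d p u + ppot d p v = ppot d p Q := by
    unfold ppot
    rw [← (summable_pot hus (by linarith)).tsum_add (summable_pot hvs (by linarith))]
    refine tsum_congr fun n => ?_
    have : p + 1 ≠ 0 := by linarith
    simp only [hu, hv]; split_ifs <;> simp [Real.zero_rpow this]
  have hP : SS (DD d J u) + SS (DD d J v) = SS (DD d J Q) := by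
    unfold SS
    rw [← (DD_bound hJ hJb hus).1.tsum_add (DD_bound hJ hJb hvs).1]
    refine tsum_congr ?_
    rintro ⟨a, b⟩
    rw [DD_sq hJ, DD_sq hJ, DD_sq hJ]
    by_cases ha : a ∈ A <;> by_cases hb : b ∈ A
    · simp [hu, hv, ha, hb]
    · simp [hcross a b ha hb]
    · simp [Jb_symm a b, hcross b a hb ha]
    · simp [hu, hv, ha, hb]
  have hEE : energy d J p u + energy d J p v = Ifun d J p ν := by
    rw [← hE]; unfold energy
    rw [pairing_eq hJ hJb hus, pairing_eq hJ hJb hvs, pairing_eq hJ hJb hQ, ← hP, ← hV]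
    ring
  have h0A : (0 : Fin d → ℤ) ∈ A := ⟨hQ0, hQ0'⟩
  have hup : 0 < mass d u := mass_pos hus (n := 0) (by simp [hu, h0A, hQ0])
  have hv0 : mass d v = 0 := by
    by_contra hne
    have hvp : 0 < mass d v := lt_of_le_of_ne (SS_nonneg v) (Ne.symm hne)
    have h1 := gain_pos hp hus hup (by linarith : mass d u < ν)
    have h2 := key_lower (J := J) hJ hp hν hus hup
    have h3 := key_lower' (J := J) hJ hp hν hvs (by linarith)
    have h4 : mass d u / ν * Ifun d J p ν + mass d v / ν * Ifun d J p ν = Ifun d J p ν := by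
      rw [← add_mul, ← add_div, hM, div_self hν.ne', one_mul]
    linarith
  intro n
  by_cases hn : n ∈ A
  · exact hn.2
  · have : Q n = 0 := by
      by_contra hne
      exact (mass_pos hvs (n := n) (by simp [hv, hn, hne])).ne' hv0
    simp [this]

lemma exists_large (hJ : ∀ k, 0 ≤ J k) (hp : 1 < p) {ν : ℝ} (hν : 0 < ν)
    (hI : Ifun d J p ν < 0) : ∃ δ > 0, ∀ u, MemL2 d u → mass d u = ν →
      energy d J p u < Ifun d J p ν / 2 → ∃ n, δ ≤ ‖u n‖ := by
  set c := -(Ifun d J p ν) / 2 * (p + 1) / ν with hc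
  have hcp : 0 < c := by
    have : 0 < -(Ifun d J p ν) := by linarith
    positivity
  refine ⟨c ^ (1 / (p - 1)), by positivity, fun u hu hm hE => ?_⟩
  by_contra! hlt
  have h := pot_le hu (by linarith : 2 < p + 1) (fun i => (hlt i).le)
  have e : (c ^ (1 / (p - 1))) ^ (p + 1 - 2) = c := by
    rw [← Real.rpow_mul hcp.le]
    have : 1 / (p - 1) * (p + 1 - 2) = 1 := by
      have : p - 1 ≠ 0 := by linarith
      rw [show p + 1 - 2 = p - 1 by ring]; field_simp
    rw [this, Real.rpow_one]
  have e2 : SS u = ν := hm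
  rw [e, e2] at h
  have h' : ppot d p u ≤ c * ν := h
  have h1 := pairing_nonneg hJ u
  have h2 := mul_le_mul_of_nonneg_left h' (by positivity : 0 ≤ 1 / (p + 1))
  have h3 : 1 / (p + 1) * (c * ν) = -(Ifun d J p ν) / 2 := by
    rw [hc]; field_simp
  unfold energy at hE
  linarith

end final

theorem stmt2 (d : ℕ) (hd : 1 ≤ d) (p : ℝ) (hp : 1 < p) (J : ℕ → ℝ)
    (hJpos : ∀ k, 0 ≤ J k) (hJbar : Summable (JbarSummand d J))
    (ν : ℝ) (hν : 0 < ν) (hIneg : Ifun d J p ν < 0)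
    (q : ℕ → (Fin d → ℤ) → ℂ)
    (hqL2 : ∀ k, MemL2 d (q k)) (hqmass : ∀ k, mass d (q k) = ν)
    (hmin : Tendsto (fun k => energy d J p (q k)) atTop (𝓝 (Ifun d J p ν))) :
    ∃ nk : ℕ → ℕ, StrictMono nk ∧
      ∃ (mk : ℕ → Fin d → ℤ) (φk : ℕ → ℝ) (qstar : (Fin d → ℤ) → ℝ),
        (∀ n, 0 ≤ qstar n) ∧ MemL2 d (fun n => (qstar n : ℂ)) ∧
        Tendsto
          (fun k => ∑' n : Fin d → ℤ,
            ‖Complex.exp (Complex.I * (φk k : ℂ)) * q (nk k) (n - mk k) - (qstar n : ℂ)‖ ^ 2)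
          atTop (𝓝 0) ∧
        mass d (fun n => (qstar n : ℂ)) = ν ∧
        energy d J p (fun n => (qstar n : ℂ)) = Ifun d J p ν ∧
        ∃ ω : ℝ, 0 < ω ∧ ∀ n, -ω * qstar n = LopR d J qstar n - qstar n ^ p := by
  obtain ⟨δ, hδ, hlarge⟩ := exists_large hJpos hp hν hIneg
  obtain ⟨N, hN⟩ := eventually_atTop.1
    (hmin.eventually (gt_mem_nhds (by linarith : Ifun d J p ν < Ifun d J p ν / 2)))
  have hex : ∀ k, ∃ n, δ ≤ ‖q (k + N) n‖ := fun k =>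
    hlarge _ (hqL2 _) (hqmass _) (hN _ (by omega))
  choose m hm using hex
  set φ : ℕ → ℝ := fun k => -Complex.arg (q (k + N) (m k)) with hφ
  set c : ℕ → ℂ := fun k => Complex.exp (Complex.I * (φ k : ℂ)) with hc
  have hcn : ∀ k, ‖c k‖ = 1 := by
    intro k; simp only [hc]; rw [mul_comm]; exact Complex.norm_exp_ofReal_mul_I _
  set v : ℕ → (Fin d → ℤ) → ℂ := fun k n => c k * q (k + N) (n - (-(m k))) with hv
  have hvL : ∀ k, MemL2 d (v k) := fun k => (shift_mem (hqL2 _) _).smul (c k)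
  have hvm : ∀ k, mass d (v k) = ν := by
    intro k
    simp only [hv]
    rw [mass_smul (fun n => q (k + N) (n - (-(m k)))), mass_shift, hcn, hqmass]; norm_num
  have hvE : ∀ k, energy d J p (v k) = energy d J p (q (k + N)) := by
    intro k
    simp only [hv]
    unfold energy
    rw [pairing_smul (fun n => q (k + N) (n - (-(m k)))), pairing_shift,
      ppot_smul (fun n => q (k + N) (n - (-(m k)))), ppot_shift, hcn]
    norm_num
  have hv0 : ∀ k, v k 0 = (‖q (k + N) (m k)‖ : ℂ) := by
    intro k
    simp only [hv, hc, hφ, zero_sub, neg_neg]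
    have h := Complex.norm_mul_exp_arg_mul_I (q (k + N) (m k))
    generalize (q (k + N) (m k)).arg = θ at h ⊢
    rw [← h, norm_mul, Complex.norm_exp_ofReal_mul_I, mul_one, mul_left_comm, ← Complex.exp_add,
      Complex.norm_real, norm_norm]
    have e : Complex.I * ((-θ : ℝ) : ℂ) + (θ : ℂ) * Complex.I = 0 := by push_cast; ring
    rw [e, Complex.exp_zero, mul_one]
  have hcompact : IsCompact (Set.univ.pi fun _ : Fin d → ℤ => Metric.closedBall (0:ℂ) √ν) :=
    isCompact_univ_pi fun _ => isCompact_closedBall _ _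
  obtain ⟨Q, -, σ, hσ, hlim⟩ := hcompact.tendsto_subseq (x := v) (fun k n _ => by
    rw [mem_closedBall_zero_iff]
    exact norm_le_sqrt (hvL k) (le_of_eq (hvm k)) n)
  have hlim' : ∀ n, Tendsto (fun k => v (σ k) n) atTop (𝓝 (Q n)) := tendsto_pi_nhds.1 hlim
  have hQn : Tendsto (fun k => ‖v (σ k) 0‖) atTop (𝓝 ‖Q 0‖) := (hlim' 0).norm
  have hQδ : δ ≤ ‖Q 0‖ := by
    refine ge_of_tendsto' hQn fun k => ?_
    rw [hv0]; simpa using hm (σ k)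
  have hQ0 : Q 0 ≠ 0 := norm_pos_iff.1 (hδ.trans_le hQδ)
  have hQ0' : Q 0 = (‖Q 0‖ : ℂ) := by
    refine tendsto_nhds_unique (hlim' 0) ?_
    have h2 : Tendsto (fun k => ((‖v (σ k) 0‖ : ℝ) : ℂ)) atTop (𝓝 ((‖Q 0‖ : ℝ) : ℂ)) :=
      (Complex.continuous_ofReal.tendsto _).comp hQn
    refine h2.congr fun k => ?_
    rw [hv0]; simp
  have hEv : Tendsto (fun k => energy d J p (v (σ k))) atTop (𝓝 (Ifun d J p ν)) := by
    simp only [hvE]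
    exact hmin.comp (tendsto_atTop_mono (fun k => Nat.le_add_right (σ k) N) hσ.tendsto_atTop)
  obtain ⟨hQL, hQm, hQE, hQS⟩ := compact_limit hJpos hJbar hp hν (fun k => hvL (σ k))
    (fun k => hvm (σ k)) hEv hlim' hQ0
  have hpos := positivity_limit hJpos hJbar hp hν hQL hQm hQE hQ0 hQ0'
  have hfun : (fun n => ((‖Q n‖ : ℝ) : ℂ)) = Q := by
    ext n; exact (hpos n).symm
  refine ⟨fun k => σ k + N, fun a b h => by have := hσ h; simpa using this,
    fun k => -(m (σ k)), fun k => φ (σ k), fun n => ‖Q n‖, fun n => norm_nonneg _, ?_, ?_, ?_, ?_,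
    (ppot d p (fun n => ((‖Q n‖ : ℝ) : ℂ)) - pairing d J (fun n => ((‖Q n‖ : ℝ) : ℂ))) / ν, ?_, ?_⟩
  · rw [hfun]; exact hQL
  · refine hQS.congr fun k => tsum_congr fun n => ?_
    rw [← hpos n]
  · rw [hfun]; exact hQm
  · rw [hfun]; exact hQE
  · rw [hfun]; exact omega_pos hp hν hIneg hQE
  · exact euler_lagrange hJpos hJbar hp hν (fun n => norm_nonneg _) (by rw [hfun]; exact hQL)
      (by rw [hfun]; exact hQm) (by rw [hfun]; exact hQE)
end
end

section
/- Assume J̄ < ∞ and that J is of order α ∈ (0,∞). Let q ∈ ℓ²(Z^d) have nonnegative entries and satisfy −ω q_n = (Lq)_n − (q_n)^p for all n ∈ Z^d, for some ω > 0. Then there exists a constant C > 0 such that q_n ≤ C (1 + |n|)^{−(d+α)} for every n ∈ Z^d. -/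
open scoped BigOperators
open Filter Topology

noncomputable section

theorem latNorm_cast {d : ℕ} (m : Fin d → ℤ) : (latNorm m : ℝ) = ‖m‖ := by
  apply le_antisymm
  · have h : latNorm m ≤ ⌊‖m‖⌋₊ := by
      unfold latNorm
      apply Finset.sup_le
      intro i _
      apply Nat.le_floor
      have h1 := norm_le_pi_norm m i
      rw [Int.norm_eq_abs] at h1
      rw [Nat.cast_natAbs, Int.cast_abs]
      exact h1
    exact (Nat.le_floor_iff (norm_nonneg _)).1 h
  · rw [pi_norm_le_iff_of_nonneg (Nat.cast_nonneg _)]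
    intro i
    have h : (m i).natAbs ≤ latNorm m :=
      Finset.le_sup (f := fun i => (m i).natAbs) (Finset.mem_univ i)
    rw [Int.norm_eq_abs, ← Int.cast_abs, ← Nat.cast_natAbs]
    exact_mod_cast h

theorem latNorm_tendsto (d : ℕ) :
    Tendsto (fun m : Fin d → ℤ => latNorm m) cofinite atTop := by
  rw [← tendsto_natCast_atTop_iff (R := ℝ)]
  simp only [latNorm_cast]
  rw [← Filter.cocompact_eq_cofinite]
  exact tendsto_norm_cocompact_atTop

/-- The barrier: `w(m) = (R+|m|)^{-s}` is almost a supersolution for large `R`. -/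
theorem barrier (d : ℕ) (s : ℝ) (hs : 0 < s) (j : (Fin d → ℤ) → ℝ) (hj0 : ∀ m, 0 ≤ j m)
    (hj : Summable j) (B : ℝ) (hB : 0 ≤ B) (hjB : ∀ m, m ≠ 0 → j m ≤ B * ‖m‖ ^ (-s))
    (hw : Summable fun m : Fin d → ℤ => (1 + ‖m‖) ^ (-s)) (ε : ℝ) (hε : 0 < ε) :
    ∃ R : ℝ, 1 ≤ R ∧ Summable (fun m : Fin d → ℤ => (R + ‖m‖) ^ (-s)) ∧
      ∀ n : Fin d → ℤ, ∑' m, j (n - m) * (R + ‖m‖) ^ (-s) ≤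
        (∑' m, j m + ε) * (R + ‖n‖) ^ (-s) := by
  set S := ∑' m, j m with hS
  have hδ : ∃ δ : ℝ, 0 < δ ∧ δ < 1 ∧ (1 - δ) ^ (-s) * S < S + ε / 2 := by
    have hc : ContinuousAt (fun δ : ℝ => (1 - δ) ^ (-s) * S) 0 := by
      apply ContinuousAt.mul _ continuousAt_const
      apply ContinuousAt.rpow_const (by fun_prop)
      left; norm_num
    have h1 : ∀ᶠ δ in 𝓝 (0:ℝ), (1 - δ) ^ (-s) * S < S + ε / 2 := by
      apply hc.eventually_lt continuousAt_const
      simp; linarith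
    have h2 : ∀ᶠ δ in 𝓝 (0:ℝ), δ < 1 := eventually_lt_nhds (by norm_num)
    have h3 := ((h1.and h2).filter_mono (nhdsWithin_le_nhds (s := Set.Ioi 0))).and
      self_mem_nhdsWithin
    obtain ⟨δ, ⟨ha, hb⟩, hc⟩ := h3.exists
    exact ⟨δ, hc, hb, ha⟩
  obtain ⟨δ, hδ0, hδ1, hδS⟩ := hδ
  have hle : ∀ R : ℝ, 1 ≤ R → ∀ m : Fin d → ℤ, (R + ‖m‖) ^ (-s) ≤ (1 + ‖m‖) ^ (-s) := by
    intro R hR m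
    exact Real.rpow_le_rpow_of_nonpos (by positivity) (by linarith) (by linarith)
  have hlim : Tendsto (fun R : ℝ => ∑' m : Fin d → ℤ, (R + ‖m‖) ^ (-s)) atTop
      (𝓝 (∑' _ : Fin d → ℤ, (0:ℝ))) := by
    apply tendsto_tsum_of_dominated_convergence hw
    · intro m
      exact (tendsto_rpow_neg_atTop hs).comp (tendsto_atTop_add_const_right _ _ tendsto_id)
    · filter_upwards [eventually_ge_atTop 1] with R hR m
      rw [Real.norm_of_nonneg (by positivity)]
      exact hle R hR m
  rw [tsum_zero] at hlim
  have hlim2 := hlim.const_mul (B * δ ^ (-s))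
  rw [mul_zero] at hlim2
  have hev := (hlim2.eventually_lt_const (half_pos hε)).and (eventually_ge_atTop 1)
  obtain ⟨R, hR, hR1⟩ := hev.exists
  have hsw : Summable (fun m : Fin d → ℤ => (R + ‖m‖) ^ (-s)) :=
    hw.of_nonneg_of_le (fun m => by positivity) (hle R hR1)
  refine ⟨R, hR1, hsw, fun n => ?_⟩
  have hjn : Summable fun m => j (n - m) := (Equiv.subLeft n).summable_iff.2 hj
  have hjt : ∑' m, j (n - m) = S := (Equiv.subLeft n).tsum_eq j
  have hWn : 0 < R + ‖n‖ := by positivity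
  set W := (R + ‖n‖) ^ (-s) with hW
  have hW0 : 0 ≤ W := by positivity
  have key : ∀ m, j (n - m) * (R + ‖m‖) ^ (-s) ≤
      ((1 - δ) ^ (-s) * W) * j (n - m) + (B * δ ^ (-s) * W) * (R + ‖m‖) ^ (-s) := by
    intro m
    have hp1 : 0 ≤ ((1 - δ) ^ (-s) * W) * j (n - m) := by
      have := hj0 (n - m)
      have : 0 ≤ 1 - δ := by linarith
      positivity
    have hp2 : 0 ≤ (B * δ ^ (-s) * W) * (R + ‖m‖) ^ (-s) := by positivity
    by_cases h : ‖n - m‖ ≤ δ * (R + ‖n‖)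
    · have htri : ‖n‖ ≤ ‖n - m‖ + ‖m‖ := by
        simpa using norm_add_le (n - m) m
      have h1 : (R + ‖m‖) ^ (-s) ≤ (1 - δ) ^ (-s) * W := by
        rw [hW, ← Real.mul_rpow (by linarith) hWn.le]
        apply Real.rpow_le_rpow_of_nonpos _ _ (by linarith)
        · exact mul_pos (by linarith) hWn
        · linarith
      have := mul_le_mul_of_nonneg_left h1 (hj0 (n - m))
      linarith
    · push Not at h
      have hpos : 0 < δ * (R + ‖n‖) := by positivity
      have hne : n - m ≠ 0 := by
        intro h0
        rw [h0, norm_zero] at h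
        linarith
      have h1 : j (n - m) ≤ B * δ ^ (-s) * W := by
        refine (hjB _ hne).trans ?_
        rw [hW, mul_assoc, ← Real.mul_rpow hδ0.le hWn.le]
        exact mul_le_mul_of_nonneg_left
          (Real.rpow_le_rpow_of_nonpos hpos h.le (by linarith)) hB
      have := mul_le_mul_of_nonneg_right h1 (show 0 ≤ (R + ‖m‖) ^ (-s) by positivity)
      linarith
  have hsr := (hjn.mul_left ((1 - δ) ^ (-s) * W)).add (hsw.mul_left (B * δ ^ (-s) * W))
  have hsl : Summable fun m => j (n - m) * (R + ‖m‖) ^ (-s) :=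
    hsr.of_nonneg_of_le (fun m => mul_nonneg (hj0 _) (by positivity)) key
  have h2 := hsl.tsum_le_tsum key hsr
  rw [Summable.tsum_add (hjn.mul_left _) (hsw.mul_left _), tsum_mul_left, tsum_mul_left, hjt] at h2
  refine h2.trans ?_
  have e1 := mul_le_mul_of_nonneg_right hδS.le hW0
  have e2 := mul_le_mul_of_nonneg_right hR.le hW0
  linarith

/-- Comparison principle. -/
theorem comparison {G : Type*} [AddCommGroup G] (j : G → ℝ) (hj0 : ∀ m, 0 ≤ j m)
    (hj : Summable j) (ε : ℝ) (hε : 0 < ε) (v : G → ℝ) (hv : Tendsto v cofinite (𝓝 0))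
    (h : ∀ n, 0 < v n → Summable (fun m => j (n - m) * v m) ∧
      (∑' m, j m + ε) * v n ≤ ∑' m, j (n - m) * v m) (n : G) : v n ≤ 0 := by
  by_contra! hn
  have hfin : {m | v n ≤ v m}.Finite := by
    have := hv.eventually_lt_const hn
    rw [Filter.eventually_cofinite] at this
    simpa using this
  obtain ⟨a, ha, hmax⟩ := hfin.exists_maximalFor v _ ⟨n, le_refl (v n)⟩
  have hmax' : ∀ m, v m ≤ v a := by
    intro m
    by_contra! hm
    have : v n ≤ v m := le_trans ha hm.le
    exact absurd (hmax this hm.le) (not_le.2 hm)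
  have hva : 0 < v a := lt_of_lt_of_le hn ha
  obtain ⟨hs, hl⟩ := h a hva
  have hjn : Summable fun m => j (a - m) := (Equiv.subLeft a).summable_iff.2 hj
  have hjt : ∑' m, j (a - m) = ∑' m, j m := (Equiv.subLeft a).tsum_eq j
  have := hs.tsum_le_tsum (fun m => mul_le_mul_of_nonneg_left (hmax' m) (hj0 (a - m)))
    (hjn.mul_right _)
  rw [tsum_mul_right, hjt] at this
  nlinarith [mul_pos hε hva]

set_option maxHeartbeats 400000 in
theorem stmt3 (d : ℕ) (hd : 1 ≤ d) (p : ℝ) (hp : 1 < p) (J : ℕ → ℝ)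
    (hJpos : ∀ k, 0 ≤ J k) (hJbar : Summable (JbarSummand d J))
    (α : ℝ) (hα : 0 < α)
    (horder : ∃ A : ℝ, 0 < A ∧
      Tendsto (fun k : ℕ => (k : ℝ) ^ ((d : ℝ) + α) * J k) atTop (𝓝 A))
    (q : (Fin d → ℤ) → ℝ) (hqpos : ∀ n, 0 ≤ q n)
    (hqL2 : Summable fun n : Fin d → ℤ => q n ^ 2)
    (ω : ℝ) (hω : 0 < ω)
    (heig : ∀ n, -ω * q n = LopR d J q n - q n ^ p) :
    ∃ C : ℝ, 0 < C ∧ ∀ n : Fin d → ℤ,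
      q n ≤ C * (1 + (latNorm n : ℝ)) ^ (-((d : ℝ) + α)) := by
  obtain ⟨A, hA, hlim⟩ := horder
  set s : ℝ := (d : ℝ) + α with hs_def
  have hs : 0 < s := by positivity
  set j := JbarSummand d J with hj_def
  clear_value j
  have hj0 : ∀ m, 0 ≤ j m := by
    intro m
    simp only [hj_def, JbarSummand]
    split_ifs
    · exact le_rfl
    · exact hJpos _
  -- upper bound on `j`
  obtain ⟨B, hB⟩ := hlim.bddAbove_range
  have hB' : ∀ k : ℕ, (k : ℝ) ^ s * J k ≤ B := fun k => hB ⟨k, rfl⟩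
  have hB0 : 0 ≤ B := le_trans (mul_nonneg (by positivity) (hJpos 1)) (hB' 1)
  have hjB : ∀ m, m ≠ 0 → j m ≤ B * ‖m‖ ^ (-s) := by
    intro m hm
    have hn : 0 < ‖m‖ := norm_pos_iff.2 hm
    have h1 := hB' (latNorm m)
    rw [latNorm_cast] at h1
    simp only [hj_def, JbarSummand, if_neg hm]
    rw [Real.rpow_neg hn.le, ← div_eq_mul_inv, le_div_iff₀ (by positivity)]
    linarith
  -- summability of the weight
  have hw : Summable fun m : Fin d → ℤ => (1 + ‖m‖) ^ (-s) := by
    have hlow := (latNorm_tendsto d).eventually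
      ((hlim.eventually_const_lt (half_lt_self hA)).and (eventually_gt_atTop 0))
    refine Summable.of_norm_bounded_eventually (hJbar.mul_left (2 / A)) ?_
    filter_upwards [hlow] with m hm
    obtain ⟨h1, h2⟩ := hm
    have hn : 0 < ‖m‖ := by rw [← latNorm_cast]; exact_mod_cast h2
    have hm0 : m ≠ 0 := norm_pos_iff.1 hn
    rw [latNorm_cast] at h1
    rw [Real.norm_of_nonneg (by positivity)]
    have h3 : (1 + ‖m‖) ^ (-s) ≤ ‖m‖ ^ (-s) :=
      Real.rpow_le_rpow_of_nonpos hn (by linarith) (by linarith)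
    refine h3.trans ?_
    simp only [hj_def, JbarSummand, if_neg hm0]
    rw [Real.rpow_neg hn.le, inv_le_iff_one_le_mul₀ (by positivity)]
    have h4 : 2 / A * J (latNorm m) * ‖m‖ ^ s = (‖m‖ ^ s * J (latNorm m)) / (A / 2) := by
      field_simp
    rw [h4, one_le_div (by positivity)]
    exact h1.le
  obtain ⟨R, hR1, hsw, hbar⟩ := barrier d s hs j hj0 hJbar B hB0 hjB hw (ω / 2) (half_pos hω)
  set S := ∑' m, j m with hS
  clear_value S
  set w : (Fin d → ℤ) → ℝ := fun m => (R + ‖m‖) ^ (-s) with hw_def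
  have hw0 : ∀ m, 0 < w m := fun m => by simp only [hw_def]; positivity
  have hbar' : ∀ n, ∑' m, j (n - m) * w m ≤ (S + ω / 2) * w n := hbar
  -- decay of `q`
  have hq2 : Tendsto (fun n => q n ^ 2) cofinite (𝓝 0) := hqL2.tendsto_cofinite_zero
  have hq : Tendsto q cofinite (𝓝 0) := by
    have h1 := (Real.continuous_sqrt.tendsto 0).comp hq2
    rw [Real.sqrt_zero] at h1
    refine h1.congr fun n => ?_
    simp [Real.sqrt_sq (hqpos n)]
  obtain ⟨M, hM⟩ : ∃ M, ∀ n, q n ≤ M := by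
    refine ⟨Real.sqrt (∑' n, q n ^ 2), fun n => ?_⟩
    apply Real.le_sqrt_of_sq_le
    exact hqL2.le_tsum n (fun m _ => sq_nonneg _)
  have hjn : ∀ n, Summable fun m => j (n - m) :=
    fun n => (Equiv.subLeft n).summable_iff.2 hJbar
  have hjt : ∀ n, ∑' m, j (n - m) = S :=
    fun n => ((Equiv.subLeft n).tsum_eq j).trans hS.symm
  have hsq : ∀ n, Summable fun m => j (n - m) * q m := by
    intro n
    refine ((hjn n).mul_right M).of_nonneg_of_le (fun m => mul_nonneg (hj0 _) (hqpos m)) ?_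
    exact fun m => mul_le_mul_of_nonneg_left (hM m) (hj0 _)
  have hswj : ∀ n, Summable fun m => j (n - m) * w m := by
    intro n
    refine ((hjn n).mul_right 1).of_nonneg_of_le (fun m => mul_nonneg (hj0 _) (hw0 m).le) ?_
    refine fun m => mul_le_mul_of_nonneg_left ?_ (hj0 _)
    exact Real.rpow_le_one_of_one_le_of_nonpos (by linarith [norm_nonneg m]) (by linarith)
  have hL : ∀ n, (S + ω) * q n = ∑' m, j (n - m) * q m + q n ^ p := by
    intro n
    have h1 : LopR d J q n = S * q n - ∑' m, j (n - m) * q m := by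
      rw [← hjt n, ← tsum_mul_right, ← Summable.tsum_sub ((hjn n).mul_right _) (hsq n)]
      unfold LopR
      congr 1
      ext m
      simp only [hj_def, JbarSummand, sub_eq_zero]
      by_cases h : m = n
      · simp [h]
      · rw [if_neg h, if_neg (Ne.symm h)]; ring
    have h2 := heig n
    rw [h1] at h2
    linarith
  -- outside a finite set the nonlinearity is small
  have hsmall : ∀ᶠ n in cofinite, q n ^ (p - 1) < ω / 2 := by
    have hc : ContinuousAt (fun x : ℝ => x ^ (p - 1)) 0 :=
      Real.continuousAt_rpow_const _ _ (Or.inr (by linarith))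
    have h1 := hc.tendsto.comp hq
    rw [Real.zero_rpow (by linarith)] at h1
    exact h1.eventually_lt_const (half_pos hω)
  have hsub : ∀ n, q n ^ (p - 1) < ω / 2 → (S + ω / 2) * q n ≤ ∑' m, j (n - m) * q m := by
    intro n hn
    have h1 : q n ^ p = q n ^ (p - 1) * q n := by
      rcases (hqpos n).eq_or_lt with h0 | h0
      · rw [← h0, Real.zero_rpow (by linarith), mul_zero]
      · rw [← Real.rpow_add_one h0.ne']; congr 1; ring
    have h2 := hL n
    have h3 := mul_le_mul_of_nonneg_right hn.le (hqpos n)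
    rw [h1] at h2
    linarith
  have hfin : {n | ¬ q n ^ (p - 1) < ω / 2}.Finite := Filter.eventually_cofinite.1 hsmall
  obtain ⟨C, hC⟩ := (hfin.image fun n => q n / w n).bddAbove
  set D := max C 1 with hD
  have hD0 : 0 < D := lt_of_lt_of_le one_pos (le_max_right _ _)
  have hmain : ∀ n, q n - D * w n ≤ 0 := by
    refine comparison j hj0 hJbar (ω / 2) (half_pos hω) (fun n => q n - D * w n) ?_ ?_
    · simpa using hq.sub (hsw.tendsto_cofinite_zero.const_mul D)
    · intro n hn
      have e : (fun m => j (n - m) * (q m - D * w m)) =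
          fun m => j (n - m) * q m - D * (j (n - m) * w m) := by
        ext m; ring
      have hns : q n ^ (p - 1) < ω / 2 := by
        by_contra hcon
        have h1 : q n / w n ≤ D := (hC ⟨n, hcon, rfl⟩).trans (le_max_left _ _)
        rw [div_le_iff₀ (hw0 n)] at h1
        linarith
      simp only [e]
      refine ⟨(hsq n).sub ((hswj n).mul_left D), ?_⟩
      rw [Summable.tsum_sub (hsq n) ((hswj n).mul_left D), tsum_mul_left]
      have h1 := hsub n hns
      have h2 := mul_le_mul_of_nonneg_left (hbar' n) hD0.le
      rw [← hS]
      linarith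
  refine ⟨D, hD0, fun n => ?_⟩
  have h1 : w n ≤ (1 + ‖n‖) ^ (-s) :=
    Real.rpow_le_rpow_of_nonpos (by positivity) (by linarith) (by linarith)
  rw [latNorm_cast]
  have h2 := hmain n
  have h3 := mul_le_mul_of_nonneg_left h1 hD0.le
  linarith
end
end

section
/- Assume J̄ < ∞, J_1 > 0, and that J is of order α ∈ (0,∞). Define δ(ξ) = |ξ|^α if α ∈ (0,2); δ(ξ) = |ξ|² (1 + |log|ξ||) for ξ ≠ 0 with δ(0) = 0 if α = 2; and δ(ξ) = |ξ|² if α ∈ (2,∞). Then there exist constants c, C > 0 such that c δ(ξ) ≤ σ(ξ) ≤ C δ(ξ) for all ξ ∈ [−π,π]^d. If instead J is of order ∞, the same two-sided bound holds with δ(ξ) = |ξ|². -/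
open scoped BigOperators
open Filter Topology

noncomputable section

open scoped ENNReal
/-- `J` is of order `α ∈ (0,∞]`: for finite `α`, `k^{d+α} J_k` tends to a finite positive
limit; for `α = ∞`, `k^{d+β} J_k → 0` for every `β > 0`. -/
def JOrder (d : ℕ) (J : ℕ → ℝ) (α : ℝ≥0∞) : Prop :=
  if α = ⊤ then
    ∀ β : ℝ, 0 < β → Tendsto (fun k : ℕ => (k : ℝ) ^ ((d : ℝ) + β) * J k) atTop (𝓝 0)
  else
    ∃ A : ℝ, 0 < A ∧ Tendsto (fun k : ℕ => (k : ℝ) ^ ((d : ℝ) + α.toReal) * J k) atTop (𝓝 A)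

/-- `α′ = α/2` for `α ∈ (0,2)` and `α′ = 1` for `α ∈ [2,∞]`. -/
def alphaPrime (α : ℝ≥0∞) : ℝ := if α < 2 then α.toReal / 2 else 1

/-- The comparison function `δ(ξ)` (as a function of `r = |ξ|`): `r^α` for `α ∈ (0,2)`,
`r²(1 + |log r|)` for `α = 2` (with value `0` at `r = 0`), and `r²` for `α ∈ (2,∞]`. -/
def deltaFun (α : ℝ≥0∞) (r : ℝ) : ℝ :=
  if α < 2 then r ^ α.toReal
  else if α = 2 then r ^ 2 * (1 + |Real.log r|)
  else r ^ 2

/-- The symbol `σ(ξ) = 2 Σ_{m ≠ 0} J_{|m|} sin²(m·ξ/2)`. -/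
def symbol (d : ℕ) (J : ℕ → ℝ) (ξ : Fin d → ℝ) : ℝ :=
  2 * ∑' m : Fin d → ℤ,
    if m = 0 then 0
    else J (latNorm m) * Real.sin ((∑ i, (m i : ℝ) * ξ i) / 2) ^ 2


/-! ### One-dimensional sums -/

lemma aux_tail_step (q : ℝ) (hq : 0 < q) (k : ℕ) (hk : 1 ≤ k) :
    ((k + 1 : ℕ) : ℝ) ^ (-1 - q) ≤ (1 / q) * ((k : ℝ) ^ (-q) - ((k + 1 : ℕ) : ℝ) ^ (-q)) := by
  have hk0 : (0 : ℝ) < k := by exact_mod_cast hk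
  have hk1 : (0 : ℝ) < ((k + 1 : ℕ) : ℝ) := by positivity
  set x : ℝ := (k : ℝ) with hx
  set y : ℝ := ((k + 1 : ℕ) : ℝ) with hy
  have hyx : y = x + 1 := by rw [hy, hx]; push_cast; ring
  have h1 : x ^ (-q) = y ^ (-q) * Real.exp (q * Real.log (y / x)) := by
    rw [Real.rpow_def_of_pos hk0, Real.rpow_def_of_pos hk1, ← Real.exp_add,
      Real.log_div hk1.ne' hk0.ne']
    congr 1; ring
  have h2 : 1 - (y / x)⁻¹ ≤ Real.log (y / x) := Real.one_sub_inv_le_log_of_pos (by positivity)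
  have h3 : (1 : ℝ) - (y / x)⁻¹ = 1 / y := by
    rw [inv_div]; field_simp; rw [hyx]; ring
  have h4 : 1 + q * (1 / y) ≤ Real.exp (q * Real.log (y / x)) := by
    have := Real.add_one_le_exp (q * Real.log (y / x))
    rw [h3] at h2
    have := mul_le_mul_of_nonneg_left h2 hq.le
    linarith
  have h5 : y ^ (-1 - q) = y ^ (-q) * (1 / y) := by
    rw [show -1 - q = -q + (-1) by ring, Real.rpow_add hk1, Real.rpow_neg_one, one_div]
  have h6 : 0 < y ^ (-q) := Real.rpow_pos_of_pos hk1 _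
  rw [h5, h1]
  have h7 : y ^ (-q) * (q * (1 / y)) ≤ y ^ (-q) * (Real.exp (q * Real.log (y / x)) - 1) :=
    mul_le_mul_of_nonneg_left (by linarith) h6.le
  calc y ^ (-q) * (1 / y) = (1 / q) * (y ^ (-q) * (q * (1 / y))) := by field_simp
    _ ≤ (1 / q) * (y ^ (-q) * (Real.exp (q * Real.log (y / x)) - 1)) :=
      mul_le_mul_of_nonneg_left h7 (by positivity)
    _ = _ := by ring

lemma aux_tail (q : ℝ) (hq : 0 < q) (K : ℕ) (hK : 1 ≤ K) (M : ℕ) :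
    ∑ k ∈ Finset.Ico (K + 1) (M + 1), (k : ℝ) ^ (-1 - q) ≤ (1 / q) * (K : ℝ) ^ (-q) := by
  rcases le_or_gt M K with h | h
  · rw [Finset.Ico_eq_empty (by omega)]
    simp; positivity
  · have : ∀ M, K ≤ M → ∑ k ∈ Finset.Ico (K + 1) (M + 1), (k : ℝ) ^ (-1 - q)
        ≤ (1 / q) * ((K : ℝ) ^ (-q) - (M : ℝ) ^ (-q)) := by
      intro M hM
      induction M, hM using Nat.le_induction with
      | base => simp
      | succ n hn ih =>
        rw [Finset.sum_Ico_succ_top (by omega)]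
        have := aux_tail_step q hq n (by omega)
        linarith
    have h1 := this M h.le
    have : 0 ≤ (1 / q) * (M : ℝ) ^ (-q) := by positivity
    linarith

lemma aux_up_step (p : ℝ) (hp : 0 < p) (n : ℕ) :
    ((n + 1 : ℕ) : ℝ) ^ (p - 1) ≤ ((1 + p) / p) * (((n + 1 : ℕ) : ℝ) ^ p - (n : ℝ) ^ p) := by
  have hy : (0 : ℝ) < ((n + 1 : ℕ) : ℝ) := by positivity
  set y : ℝ := ((n + 1 : ℕ) : ℝ) with hydef
  have hn : (n : ℝ) = y - 1 := by rw [hydef]; push_cast; ring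
  have hy1 : 1 ≤ y := by rw [hydef]; push_cast; linarith [(Nat.cast_nonneg n : (0 : ℝ) ≤ n)]
  have h1 : (n : ℝ) ^ p ≤ y ^ p * Real.exp (-(p / y)) := by
    have : (n : ℝ) ≤ y * Real.exp (-(1 / y)) := by
      have h := Real.add_one_le_exp (-(1 / y))
      have := mul_le_mul_of_nonneg_left h hy.le
      rw [hn]
      have e : y * (-(1 / y) + 1) = y - 1 := by field_simp; ring
      linarith
    calc (n : ℝ) ^ p ≤ (y * Real.exp (-(1 / y))) ^ p :=
          Real.rpow_le_rpow (Nat.cast_nonneg n) this hp.le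
      _ = _ := by
        rw [Real.mul_rpow hy.le (Real.exp_pos _).le, ← Real.exp_mul]
        congr 2; ring
  have h2 : Real.exp (-(p / y)) ≤ 1 / (1 + p / y) := by
    rw [Real.exp_neg, ← one_div]
    apply one_div_le_one_div_of_le (by positivity)
    linarith [Real.add_one_le_exp (p / y)]
  have h3 : p / (1 + p) * (1 / y) ≤ 1 - 1 / (1 + p / y) := by
    have : 1 - 1 / (1 + p / y) = p / (y + p) := by field_simp; ring
    rw [this, div_mul_div_comm, mul_one]
    apply div_le_div_of_nonneg_left hp.le (by positivity)
    nlinarith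
  have h4 : 0 < y ^ p := Real.rpow_pos_of_pos hy _
  have h5 : y ^ (p - 1) = y ^ p * (1 / y) := by
    rw [Real.rpow_sub_one hy.ne']; ring
  have h6 : y ^ p * (p / (1 + p) * (1 / y)) ≤ y ^ p * (1 - Real.exp (-(p / y))) :=
    mul_le_mul_of_nonneg_left (by linarith) h4.le
  rw [h5]
  calc y ^ p * (1 / y) = ((1 + p) / p) * (y ^ p * (p / (1 + p) * (1 / y))) := by field_simp
    _ ≤ ((1 + p) / p) * (y ^ p - (n : ℝ) ^ p) :=
      mul_le_mul_of_nonneg_left (by linarith) (by positivity)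

lemma aux_up (p : ℝ) (hp : 0 < p) (K : ℕ) :
    ∑ k ∈ Finset.Ico 1 (K + 1), (k : ℝ) ^ (p - 1) ≤ ((1 + p) / p) * (K : ℝ) ^ p := by
  induction K with
  | zero => simp [Real.zero_rpow hp.ne']
  | succ n ih =>
    rw [Finset.sum_Ico_succ_top (by omega)]
    have := aux_up_step p hp n
    linarith

lemma aux_low_step (p : ℝ) (hp : 0 < p) (k : ℕ) (hk : 1 ≤ k) :
    ((k + 1 : ℕ) : ℝ) ^ p - (k : ℝ) ^ p ≤ (p * Real.exp p) * (k : ℝ) ^ (p - 1) := by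
  have hx1 : (1 : ℝ) ≤ k := by exact_mod_cast hk
  have hx : (0 : ℝ) < k := by linarith
  push_cast
  set x : ℝ := (k : ℝ)
  have h1 : (x + 1) ^ p ≤ x ^ p * Real.exp (p / x) := by
    have : x + 1 ≤ x * Real.exp (1 / x) := by
      have h := Real.add_one_le_exp (1 / x)
      have := mul_le_mul_of_nonneg_left h hx.le
      have e : x * (1 / x + 1) = x + 1 := by field_simp; ring
      linarith
    calc (x + 1) ^ p ≤ (x * Real.exp (1 / x)) ^ p :=
          Real.rpow_le_rpow (by linarith) this hp.le
      _ = _ := by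
        rw [Real.mul_rpow hx.le (Real.exp_pos _).le, ← Real.exp_mul]
        congr 2; ring
  have h2 : Real.exp (p / x) ≤ 1 + p / x * Real.exp p := by
    have hle : p / x ≤ p := div_le_self hp.le hx1
    have h := Real.add_one_le_exp (-(p / x))
    have h_alt := mul_le_mul_of_nonneg_left h (Real.exp_pos (p / x)).le
    rw [← Real.exp_add, add_neg_cancel, Real.exp_zero] at h_alt
    have h3 : p / x * Real.exp (p / x) ≤ p / x * Real.exp p :=
      mul_le_mul_of_nonneg_left (Real.exp_le_exp.mpr hle) (by positivity)
    linarith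
  have h4 : 0 < x ^ p := Real.rpow_pos_of_pos hx _
  have h5 : x ^ (p - 1) = x ^ p * (1 / x) := by
    rw [Real.rpow_sub_one hx.ne']; ring
  have h6 := mul_le_mul_of_nonneg_left h2 h4.le
  rw [h5]
  calc (x + 1) ^ p - x ^ p ≤ x ^ p * (1 + p / x * Real.exp p) - x ^ p := by linarith
    _ = _ := by ring

lemma aux_low (p : ℝ) (hp : 0 < p) (K : ℕ) :
    ((K + 1 : ℕ) : ℝ) ^ p ≤
      1 + (p * Real.exp p) * ∑ k ∈ Finset.Ico 1 (K + 1), (k : ℝ) ^ (p - 1) := by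
  induction K with
  | zero => simp
  | succ n ih =>
    rw [Finset.sum_Ico_succ_top (by omega)]
    have := aux_low_step p hp (n + 1) (by omega)
    linarith

lemma aux_log_low (K : ℕ) :
    Real.log ((K + 1 : ℕ) : ℝ) ≤ ∑ k ∈ Finset.Ico 1 (K + 1), (k : ℝ) ^ (-1 : ℝ) := by
  induction K with
  | zero => simp
  | succ n ih =>
    rw [Finset.sum_Ico_succ_top (by omega)]
    have h0 : (0 : ℝ) < ((n + 1 : ℕ) : ℝ) := by positivity
    have h1 : (0 : ℝ) < ((n + 1 + 1 : ℕ) : ℝ) := by positivity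
    have h := Real.log_le_sub_one_of_pos (div_pos h1 h0)
    rw [Real.log_div h1.ne' h0.ne'] at h
    have e : ((n + 1 + 1 : ℕ) : ℝ) / ((n + 1 : ℕ) : ℝ) - 1 = ((n + 1 : ℕ) : ℝ) ^ (-1 : ℝ) := by
      rw [Real.rpow_neg_one]; push_cast; field_simp; ring
    linarith

lemma aux_log_up (K : ℕ) (hK : 1 ≤ K) :
    ∑ k ∈ Finset.Ico 1 (K + 1), (k : ℝ) ^ (-1 : ℝ) ≤ 1 + Real.log K := by
  induction K, hK using Nat.le_induction with
  | base => simp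
  | succ n hn ih =>
    rw [Finset.sum_Ico_succ_top (by omega)]
    have h0 : (0 : ℝ) < n := by exact_mod_cast hn
    have h1 : (0 : ℝ) < ((n + 1 : ℕ) : ℝ) := by positivity
    have h := Real.one_sub_inv_le_log_of_pos (div_pos h1 h0)
    rw [Real.log_div h1.ne' h0.ne'] at h
    have e : 1 - (((n + 1 : ℕ) : ℝ) / (n : ℝ))⁻¹ = ((n + 1 : ℕ) : ℝ) ^ (-1 : ℝ) := by
      rw [Real.rpow_neg_one]; push_cast; field_simp; ring
    linarith

/-! ### Lattice points -/

lemma latNorm_le_iff {d : ℕ} (m : Fin d → ℤ) (n : ℕ) :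
    latNorm m ≤ n ↔ ∀ i, (m i).natAbs ≤ n := by
  simp [latNorm, Finset.sup_le_iff]

lemma latNorm_eq_zero_iff {d : ℕ} (m : Fin d → ℤ) : latNorm m = 0 ↔ m = 0 := by
  rw [← Nat.le_zero, latNorm_le_iff]
  constructor
  · intro h; funext i; have := h i; simp at this; simpa using this
  · rintro rfl; simp

/-- the cube `{|m| ≤ n}` -/
def cube (d n : ℕ) : Finset (Fin d → ℤ) :=
  Fintype.piFinset fun _ => Finset.Icc (-(n : ℤ)) n

lemma mem_cube {d n : ℕ} (m : Fin d → ℤ) : m ∈ cube d n ↔ latNorm m ≤ n := by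
  rw [latNorm_le_iff, cube, Fintype.mem_piFinset]
  refine forall_congr' fun i => ?_
  rw [Finset.mem_Icc]; omega

lemma card_cube (d n : ℕ) : (cube d n).card = (2 * n + 1) ^ d := by
  rw [cube, Fintype.card_piFinset]
  simp only [Int.card_Icc, Finset.prod_const, Finset.card_univ, Fintype.card_fin]
  congr 1; omega

lemma card_shell (d : ℕ) (hd : 1 ≤ d) (k : ℕ) (hk : 1 ≤ k) (F : Finset (Fin d → ℤ)) :
    ((F.filter fun m => latNorm m = k).card : ℝ) ≤
      (2 * d * 3 ^ (d - 1)) * (k : ℝ) ^ (d - 1) := by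
  have hsub : (F.filter fun m => latNorm m = k) ⊆ cube d k \ cube d (k - 1) := by
    intro m hm
    rw [Finset.mem_filter] at hm
    rw [Finset.mem_sdiff, mem_cube, mem_cube]; omega
  have hss : cube d (k - 1) ⊆ cube d k := by
    intro m hm; rw [mem_cube] at *; omega
  have h1 := Finset.card_le_card hsub
  have h2 := Finset.card_sdiff_add_card_eq_card hss
  rw [card_cube, card_cube] at h2
  have h3 : ((F.filter fun m => latNorm m = k).card : ℝ) ≤
      (2 * (k : ℝ) + 1) ^ d - (2 * (k : ℝ) - 1) ^ d := by
    have h4 : (F.filter fun m => latNorm m = k).card + (2 * (k - 1) + 1) ^ d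
      ≤ (2 * k + 1) ^ d := by omega
    have h5 : ((F.filter fun m => latNorm m = k).card : ℝ) + (2 * ((k - 1 : ℕ) : ℝ) + 1) ^ d
      ≤ (2 * (k : ℝ) + 1) ^ d := by exact_mod_cast h4
    rw [Nat.cast_sub hk] at h5
    have e : (2 * ((k : ℝ) - ((1 : ℕ) : ℝ)) + 1) = 2 * (k : ℝ) - 1 := by push_cast; ring
    rw [e] at h5; linarith
  have hk1 : (1 : ℝ) ≤ k := by exact_mod_cast hk
  have h6 := abs_pow_sub_pow_le (2 * (k : ℝ) + 1) (2 * (k : ℝ) - 1) d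
  have h7 : max |2 * (k : ℝ) + 1| |2 * (k : ℝ) - 1| ≤ 3 * k := by
    rw [abs_of_nonneg (by linarith), abs_of_nonneg (by linarith)]
    apply max_le <;> linarith
  have h8 : max |2 * (k : ℝ) + 1| |2 * (k : ℝ) - 1| ^ (d - 1) ≤ (3 * k) ^ (d - 1) :=
    pow_le_pow_left₀ (le_max_of_le_left (abs_nonneg _)) h7 _
  have h9 : |2 * (k : ℝ) + 1 - (2 * (k : ℝ) - 1)| = 2 := by
    rw [show 2 * (k : ℝ) + 1 - (2 * (k : ℝ) - 1) = 2 by ring]; norm_num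
  rw [h9] at h6
  calc _ ≤ (2 * (k : ℝ) + 1) ^ d - (2 * (k : ℝ) - 1) ^ d := h3
    _ ≤ _ := le_abs_self _
    _ ≤ _ := h6
    _ ≤ 2 * d * (3 * k) ^ (d - 1) := mul_le_mul_of_nonneg_left h8 (by positivity)
    _ = _ := by rw [mul_pow]; ring

/-- summand of the symbol -/
def symTerm (d : ℕ) (J : ℕ → ℝ) (ξ : Fin d → ℝ) (m : Fin d → ℤ) : ℝ :=
  if m = 0 then 0 else J (latNorm m) * Real.sin ((∑ i, (m i : ℝ) * ξ i) / 2) ^ 2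

lemma symbol_eq (d : ℕ) (J : ℕ → ℝ) (ξ : Fin d → ℝ) :
    symbol d J ξ = 2 * ∑' m, symTerm d J ξ m := rfl

lemma symTerm_nonneg (d : ℕ) (J : ℕ → ℝ) (hJ : ∀ k, 0 ≤ J k) (ξ : Fin d → ℝ) (m : Fin d → ℤ) :
    0 ≤ symTerm d J ξ m := by
  unfold symTerm; split_ifs
  · exact le_rfl
  · exact mul_nonneg (hJ _) (sq_nonneg _)

lemma symTerm_summable (d : ℕ) (J : ℕ → ℝ) (hJ : ∀ k, 0 ≤ J k)
    (hs : Summable (JbarSummand d J)) (ξ : Fin d → ℝ) : Summable (symTerm d J ξ) := by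
  refine Summable.of_nonneg_of_le (symTerm_nonneg d J hJ ξ) (fun m => ?_) hs
  unfold symTerm JbarSummand; split_ifs
  · exact le_rfl
  · exact mul_le_of_le_one_right (hJ _) (Real.sin_sq_le_one _)

lemma dot_sq_le (d : ℕ) (ξ : Fin d → ℝ) (m : Fin d → ℤ) :
    (∑ i, (m i : ℝ) * ξ i) ^ 2 ≤ d * (latNorm m : ℝ) ^ 2 * ∑ i, ξ i ^ 2 := by
  refine (Finset.sum_mul_sq_le_sq_mul_sq _ _ _).trans ?_
  refine mul_le_mul_of_nonneg_right ?_ (Finset.sum_nonneg fun i _ => sq_nonneg _)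
  have : ∀ i ∈ (Finset.univ : Finset (Fin d)), (m i : ℝ) ^ 2 ≤ (latNorm m : ℝ) ^ 2 := by
    intro i _
    have h := (latNorm_le_iff m (latNorm m)).mp le_rfl i
    rw [sq_le_sq, Nat.abs_cast, ← Int.cast_abs, Int.abs_eq_natAbs]
    exact_mod_cast h
  simpa using Finset.sum_le_card_nsmul _ _ _ this

/-- Upper bound of the symbol by a one-dimensional sum. -/
lemma symbol_upper (d : ℕ) (hd : 1 ≤ d) (J : ℕ → ℝ) (hJ : ∀ k, 0 ≤ J k)
    (hs : Summable (JbarSummand d J)) (a B : ℝ) (hB0 : 0 < B)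
    (hB : ∀ k : ℕ, 1 ≤ k → J k ≤ B * (k : ℝ) ^ (-((d : ℝ) + a))) :
    ∃ C : ℝ, 0 < C ∧ ∀ (ξ : Fin d → ℝ) (D : ℝ),
      (∀ M : ℕ, ∑ k ∈ Finset.Ico 1 (M + 1), (k : ℝ) ^ (-1 - a) *
        min 1 ((k : ℝ) ^ 2 * ∑ i, ξ i ^ 2) ≤ D) → symbol d J ξ ≤ C * D := by
  have hd0 : (0 : ℝ) < d := by exact_mod_cast hd
  have hd1 : (1 : ℝ) ≤ d := by exact_mod_cast hd
  refine ⟨2 * ((2 * d * 3 ^ (d - 1)) * (B * d)), by positivity, fun ξ D hD => ?_⟩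
  set R := ∑ i, ξ i ^ 2 with hR
  have hR0 : 0 ≤ R := Finset.sum_nonneg fun i _ => sq_nonneg _
  rw [symbol_eq, mul_assoc]
  refine mul_le_mul_of_nonneg_left ?_ (by norm_num)
  refine (symTerm_summable d J hJ hs ξ).tsum_le_of_sum_le fun F => ?_
  set g : ℕ → ℝ := fun k => if k = 0 then 0 else
    (B * d) * ((k : ℝ) ^ (-((d : ℝ) + a)) * min 1 ((k : ℝ) ^ 2 * R)) with hg
  have hterm : ∀ m, symTerm d J ξ m ≤ g (latNorm m) := by
    intro m
    unfold symTerm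
    split_ifs with h
    · rw [← latNorm_eq_zero_iff] at h; simp [hg, h]
    · have h_alt : latNorm m ≠ 0 := fun h0 => h ((latNorm_eq_zero_iff m).mp h0)
      simp only [hg, if_neg h_alt]
      have hsin : Real.sin ((∑ i, (m i : ℝ) * ξ i) / 2) ^ 2 ≤
          d * min 1 ((latNorm m : ℝ) ^ 2 * R) := by
        rw [mul_min_of_nonneg _ _ hd0.le]
        refine le_min ((Real.sin_sq_le_one _).trans (by linarith)) ?_
        have h1 : Real.sin ((∑ i, (m i : ℝ) * ξ i) / 2) ^ 2 ≤ ((∑ i, (m i : ℝ) * ξ i) / 2) ^ 2 :=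
          sq_le_sq.mpr Real.abs_sin_le_abs
        have h2 := dot_sq_le d ξ m
        have h3 := sq_nonneg (∑ i, (m i : ℝ) * ξ i)
        have h4 : ((∑ i, (m i : ℝ) * ξ i) / 2) ^ 2 = (∑ i, (m i : ℝ) * ξ i) ^ 2 / 4 := by ring
        rw [← mul_assoc]
        linarith
      calc _ ≤ (B * (latNorm m : ℝ) ^ (-((d : ℝ) + a))) * (d * min 1 ((latNorm m : ℝ) ^ 2 * R)) :=
            mul_le_mul (hB _ (by omega)) hsin (sq_nonneg _) (by positivity)
        _ = _ := by ring
  set M := F.sup latNorm with hM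
  have hmap : ∀ m ∈ F, latNorm m ∈ Finset.range (M + 1) := fun m hm => by
    rw [Finset.mem_range]; exact Nat.lt_succ_of_le (Finset.le_sup (f := latNorm) hm)
  calc ∑ m ∈ F, symTerm d J ξ m ≤ ∑ m ∈ F, g (latNorm m) := Finset.sum_le_sum fun m _ => hterm m
    _ = ∑ k ∈ Finset.range (M + 1), ∑ m ∈ F with latNorm m = k, g (latNorm m) :=
        (Finset.sum_fiberwise_of_maps_to hmap _).symm
    _ = ∑ k ∈ Finset.range (M + 1), ((F.filter fun m => latNorm m = k).card : ℝ) * g k := by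
        refine Finset.sum_congr rfl fun k _ => ?_
        rw [Finset.sum_congr rfl (g := fun _ => g k), Finset.sum_const, nsmul_eq_mul]
        intro m hm; rw [(Finset.mem_filter.mp hm).2]
    _ = ∑ k ∈ Finset.Ico 1 (M + 1), ((F.filter fun m => latNorm m = k).card : ℝ) * g k := by
        rw [Finset.range_eq_Ico, Finset.sum_eq_sum_Ico_succ_bot (by omega)]
        simp [hg]
    _ ≤ ∑ k ∈ Finset.Ico 1 (M + 1), (2 * d * 3 ^ (d - 1)) * (B * d) *
          ((k : ℝ) ^ (-1 - a) * min 1 ((k : ℝ) ^ 2 * R)) := by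
        refine Finset.sum_le_sum fun k hk => ?_
        have hk1 : 1 ≤ k := (Finset.mem_Ico.mp hk).1
        have hk0 : (0 : ℝ) < k := by exact_mod_cast hk1
        have hgk : g k = (B * d) * ((k : ℝ) ^ (-((d : ℝ) + a)) * min 1 ((k : ℝ) ^ 2 * R)) := by
          simp only [hg]; rw [if_neg (by omega)]
        have hg0 : 0 ≤ g k := by rw [hgk]; positivity
        refine (mul_le_mul_of_nonneg_right (card_shell d hd k hk1 F) hg0).trans_eq ?_
        have e : (k : ℝ) ^ (-1 - a) = (k : ℝ) ^ (d - 1) * (k : ℝ) ^ (-((d : ℝ) + a)) := by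
          rw [← Real.rpow_natCast, ← Real.rpow_add hk0, Nat.cast_sub hd]
          congr 1; push_cast; ring
        rw [hgk, e]; ring
    _ = (2 * d * 3 ^ (d - 1)) * (B * d) * ∑ k ∈ Finset.Ico 1 (M + 1),
          ((k : ℝ) ^ (-1 - a) * min 1 ((k : ℝ) ^ 2 * R)) := by rw [Finset.mul_sum]
    _ ≤ _ := mul_le_mul_of_nonneg_left (hD M) (by positivity)

/-! ### Lower bounds -/

lemma symbol_lower_quad (d : ℕ) (J : ℕ → ℝ) (hJ : ∀ k, 0 ≤ J k)
    (hs : Summable (JbarSummand d J)) (ξ : Fin d → ℝ) (hξ : ∀ i, |ξ i| ≤ Real.pi) (i : Fin d) :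
    (2 * J 1 / Real.pi ^ 2) * ξ i ^ 2 ≤ symbol d J ξ := by
  have hπ := Real.pi_pos
  have h1 := (symTerm_summable d J hJ hs ξ).le_tsum (Pi.single i 1)
    (fun m _ => symTerm_nonneg d J hJ ξ m)
  have hne : (Pi.single i 1 : Fin d → ℤ) ≠ 0 := by simp
  have hlat : latNorm (Pi.single i 1 : Fin d → ℤ) = 1 := by
    apply le_antisymm
    · rw [latNorm_le_iff]; intro j
      by_cases h : j = i
      · subst h; simp
      · simp [h]
    · rw [Nat.one_le_iff_ne_zero, Ne, latNorm_eq_zero_iff]; exact hne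
  have hdot : ∑ j, ((Pi.single i 1 : Fin d → ℤ) j : ℝ) * ξ j = ξ i := by
    rw [Finset.sum_eq_single i]
    · simp
    · intro j _ hj; simp [hj]
    · simp
  have hval : symTerm d J ξ (Pi.single i 1) = J 1 * Real.sin (ξ i / 2) ^ 2 := by
    unfold symTerm; rw [if_neg hne, hlat, hdot]
  have hsin : ξ i ^ 2 / Real.pi ^ 2 ≤ Real.sin (ξ i / 2) ^ 2 := by
    have h := Real.mul_abs_le_abs_sin (x := ξ i / 2) (by
      rw [abs_div, abs_two]; linarith [hξ i])
    have h2 : (2 / Real.pi * |ξ i / 2|) ^ 2 ≤ |Real.sin (ξ i / 2)| ^ 2 :=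
      pow_le_pow_left₀ (by positivity) h 2
    rw [sq_abs, mul_pow, sq_abs] at h2
    refine le_trans (le_of_eq ?_) h2
    field_simp
  rw [symbol_eq]
  rw [hval] at h1
  have := mul_le_mul_of_nonneg_left hsin (hJ 1)
  calc (2 * J 1 / Real.pi ^ 2) * ξ i ^ 2 = 2 * (J 1 * (ξ i ^ 2 / Real.pi ^ 2)) := by ring
    _ ≤ _ := by linarith

/-- A face of the shell `|m| = k` on which all the products `m j * ξ j` are nonnegative. -/
def face (d : ℕ) (ξ : Fin d → ℝ) (i : Fin d) (k : ℕ) : Finset (Fin d → ℤ) :=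
  Fintype.piFinset fun j =>
    if j = i then {if 0 ≤ ξ i then (k : ℤ) else -(k : ℤ)}
    else if 0 ≤ ξ j then Finset.Icc 0 (k : ℤ) else Finset.Icc (-(k : ℤ)) 0

lemma card_face (d : ℕ) (ξ : Fin d → ℝ) (i : Fin d) (k : ℕ) :
    (face d ξ i k).card = (k + 1) ^ (d - 1) := by
  rw [face, Fintype.card_piFinset, ← Finset.mul_prod_erase _ _ (Finset.mem_univ i)]
  rw [Finset.prod_congr rfl (g := fun _ => k + 1)]
  · simp
  · intro j hj
    rw [if_neg (Finset.ne_of_mem_erase hj)]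
    split_ifs <;> simp <;> omega

lemma face_prop (d : ℕ) (ξ : Fin d → ℝ) (i : Fin d) (k : ℕ) (m : Fin d → ℤ)
    (hm : m ∈ face d ξ i k) :
    (m i : ℝ) * ξ i = k * |ξ i| ∧ (∀ j, 0 ≤ (m j : ℝ) * ξ j) ∧
      (∀ j, (m j : ℝ) * ξ j ≤ k * |ξ j|) ∧ latNorm m = k := by
  rw [face, Fintype.mem_piFinset] at hm
  have hi : m i = if 0 ≤ ξ i then (k : ℤ) else -(k : ℤ) := by simpa using hm i
  have hj : ∀ j, (0 ≤ ξ j ∧ 0 ≤ m j ∧ m j ≤ k) ∨ (ξ j < 0 ∧ -(k : ℤ) ≤ m j ∧ m j ≤ 0) := by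
    intro j
    by_cases h : j = i
    · subst h
      rw [hi]
      split_ifs with h0
      · left; refine ⟨h0, by positivity, le_rfl⟩
      · right; refine ⟨not_le.mp h0, le_rfl, by simp⟩
    · have := hm j
      rw [if_neg h] at this
      split_ifs at this with h0
      · left; exact ⟨h0, Finset.mem_Icc.mp this⟩
      · right; exact ⟨not_le.mp h0, Finset.mem_Icc.mp this⟩
  refine ⟨?_, ?_, ?_, ?_⟩
  · rw [hi]
    split_ifs with h0
    · rw [abs_of_nonneg h0]; simp
    · rw [abs_of_neg (not_le.mp h0)]; push_cast; ring
  · intro j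
    rcases hj j with ⟨h0, h1, h2⟩ | ⟨h0, h1, h2⟩
    · exact mul_nonneg (by exact_mod_cast h1) h0
    · exact mul_nonneg_of_nonpos_of_nonpos (by exact_mod_cast h2) h0.le
  · intro j
    rcases hj j with ⟨h0, h1, h2⟩ | ⟨h0, h1, h2⟩
    · rw [abs_of_nonneg h0]
      exact mul_le_mul_of_nonneg_right (by exact_mod_cast h2) h0
    · rw [abs_of_neg h0]
      have : (-(k : ℝ)) ≤ (m j : ℝ) := by exact_mod_cast h1
      nlinarith
  · apply le_antisymm
    · rw [latNorm_le_iff]; intro j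
      rcases hj j with ⟨h0, h1, h2⟩ | ⟨h0, h1, h2⟩ <;> omega
    · have h := (latNorm_le_iff m (latNorm m)).mp le_rfl i
      rw [hi] at h
      split_ifs at h <;> simpa using h

lemma symbol_lower_sum (d : ℕ) (hd : 1 ≤ d) (J : ℕ → ℝ) (hJ : ∀ k, 0 ≤ J k)
    (hs : Summable (JbarSummand d J)) (a b : ℝ) (hb : 0 < b) (k0 : ℕ) (hk0 : 1 ≤ k0)
    (hlow : ∀ k : ℕ, k0 ≤ k → b * (k : ℝ) ^ (-((d : ℝ) + a)) ≤ J k)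
    (ξ : Fin d → ℝ) (i : Fin d) (hi : ∀ j, |ξ j| ≤ |ξ i|) (K : ℕ)
    (hK : K * d * |ξ i| ≤ Real.pi) :
    (2 * b / Real.pi ^ 2) * ξ i ^ 2 * ∑ k ∈ Finset.Ico k0 (K + 1), (k : ℝ) ^ (1 - a)
      ≤ symbol d J ξ := by
  have hπ := Real.pi_pos
  have hdisj : (↑(Finset.Ico k0 (K + 1)) : Set ℕ).PairwiseDisjoint (face d ξ i) := by
    intro k _ l _ hkl
    rw [Function.onFun, Finset.disjoint_left]
    intro m h1 h2
    exact hkl ((face_prop d ξ i k m h1).2.2.2.symm.trans (face_prop d ξ i l m h2).2.2.2)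
  have h1 := (symTerm_summable d J hJ hs ξ).sum_le_tsum
    ((Finset.Ico k0 (K + 1)).biUnion (face d ξ i)) (fun m _ => symTerm_nonneg d J hJ ξ m)
  rw [Finset.sum_biUnion hdisj] at h1
  have h2 : ∀ k ∈ Finset.Ico k0 (K + 1), (b / Real.pi ^ 2 * ξ i ^ 2) * (k : ℝ) ^ (1 - a) ≤
      ∑ m ∈ face d ξ i k, symTerm d J ξ m := by
    intro k hk
    rw [Finset.mem_Ico] at hk
    have hk1 : 1 ≤ k := hk0.trans hk.1
    have hkp : (0 : ℝ) < k := by exact_mod_cast hk1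
    have h3 : ∀ m ∈ face d ξ i k, (b * (k : ℝ) ^ (-((d : ℝ) + a))) *
        (k * |ξ i| / Real.pi) ^ 2 ≤ symTerm d J ξ m := by
      intro m hm
      obtain ⟨p1, p2, p3, p4⟩ := face_prop d ξ i k m hm
      have hne : m ≠ 0 := by
        intro h; rw [← latNorm_eq_zero_iff] at h; omega
      unfold symTerm
      rw [if_neg hne, p4]
      have hge : k * |ξ i| ≤ ∑ j, (m j : ℝ) * ξ j := by
        rw [← p1]
        exact Finset.single_le_sum (f := fun j => (m j : ℝ) * ξ j) (fun j _ => p2 j)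
          (Finset.mem_univ i)
      have hle : ∑ j, (m j : ℝ) * ξ j ≤ Real.pi := by
        have : ∑ j, (m j : ℝ) * ξ j ≤ ∑ _j : Fin d, k * |ξ i| :=
          Finset.sum_le_sum fun j _ =>
            (p3 j).trans (mul_le_mul_of_nonneg_left (hi j) hkp.le)
        rw [Finset.sum_const, Finset.card_univ, Fintype.card_fin, nsmul_eq_mul] at this
        have hkK : (k : ℝ) ≤ K := by exact_mod_cast Nat.lt_succ_iff.mp hk.2
        have : (k : ℝ) * (d * |ξ i|) ≤ K * (d * |ξ i|) :=
          mul_le_mul_of_nonneg_right hkK (by positivity)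
        linarith
      have h0 : 0 ≤ k * |ξ i| := by positivity
      have hsin := Real.mul_le_sin (x := (∑ j, (m j : ℝ) * ξ j) / 2) (by linarith) (by linarith)
      have hsin2 : k * |ξ i| / Real.pi ≤ Real.sin ((∑ j, (m j : ℝ) * ξ j) / 2) := by
        refine le_trans ?_ hsin
        have := div_le_div_of_nonneg_right hge hπ.le
        refine this.trans_eq ?_
        field_simp
      refine mul_le_mul (hlow k hk.1) (pow_le_pow_left₀ (by positivity) hsin2 2)
        (by positivity) (hJ k)
    have h4 := Finset.card_nsmul_le_sum _ _ _ h3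
    rw [card_face, nsmul_eq_mul] at h4
    refine le_trans ?_ h4
    have h5 : (k : ℝ) ^ (d - 1) ≤ (((k + 1) ^ (d - 1) : ℕ) : ℝ) := by
      push_cast
      exact pow_le_pow_left₀ hkp.le (by linarith) _
    refine le_trans (le_of_eq ?_) (mul_le_mul_of_nonneg_right h5 (by positivity))
    have e : (k : ℝ) ^ (1 - a) = (k : ℝ) ^ (d - 1) * (k : ℝ) ^ (-((d : ℝ) + a)) * (k : ℝ) ^ 2 := by
      rw [← Real.rpow_natCast, ← Real.rpow_natCast, ← Real.rpow_add hkp, ← Real.rpow_add hkp,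
        Nat.cast_sub hd]
      congr 1; push_cast; ring
    rw [e, div_pow, mul_pow, sq_abs]; ring
  have h6 := Finset.sum_le_sum h2
  rw [← Finset.mul_sum] at h6
  rw [symbol_eq]
  calc _ = 2 * ((b / Real.pi ^ 2 * ξ i ^ 2) *
        ∑ k ∈ Finset.Ico k0 (K + 1), (k : ℝ) ^ (1 - a)) := by ring
    _ ≤ _ := by linarith

lemma symbol_lower (d : ℕ) (hd : 1 ≤ d) (J : ℕ → ℝ) (hJ : ∀ k, 0 ≤ J k)
    (hs : Summable (JbarSummand d J)) (hJ1 : 0 < J 1)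
    (a b : ℝ) (hb : 0 < b) (k0 : ℕ) (hk0 : 1 ≤ k0)
    (hlow : ∀ k : ℕ, k0 ≤ k → b * (k : ℝ) ^ (-((d : ℝ) + a)) ≤ J k) :
    ∃ c : ℝ, 0 < c ∧ ∀ (ξ : Fin d → ℝ), (∀ i, |ξ i| ≤ Real.pi) →
      ∀ i : Fin d, (∀ j, |ξ j| ≤ |ξ i|) → ∀ K : ℕ, K * d * |ξ i| ≤ Real.pi →
      c * (ξ i ^ 2 * (1 + ∑ k ∈ Finset.Ico 1 (K + 1), (k : ℝ) ^ (1 - a))) ≤ symbol d J ξ := by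
  have hπ := Real.pi_pos
  set E := ∑ k ∈ Finset.Ico 1 k0, (k : ℝ) ^ (1 - a) with hE
  have hE0 : 0 ≤ E := Finset.sum_nonneg fun k _ => by positivity
  set A1 := 2 * J 1 / Real.pi ^ 2 with hA1
  set A2 := 2 * b / Real.pi ^ 2 with hA2
  have hA1p : 0 < A1 := by positivity
  have hA2p : 0 < A2 := by positivity
  refine ⟨1 / ((1 + E) / A1 + 1 / A2), by positivity, fun ξ hξ i hi K hK => ?_⟩
  have q1 := symbol_lower_quad d J hJ hs ξ hξ i
  have q2 := symbol_lower_sum d hd J hJ hs a b hb k0 hk0 hlow ξ i hi K hK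
  set S := ∑ k ∈ Finset.Ico k0 (K + 1), (k : ℝ) ^ (1 - a) with hS
  have hsum : ∑ k ∈ Finset.Ico 1 (K + 1), (k : ℝ) ^ (1 - a) ≤ E + S := by
    have hsub : Finset.Ico 1 (K + 1) ⊆ Finset.Ico 1 k0 ∪ Finset.Ico k0 (K + 1) := by
      intro k; simp only [Finset.mem_union, Finset.mem_Ico]; omega
    have hdis : Disjoint (Finset.Ico 1 k0) (Finset.Ico k0 (K + 1)) :=
      Finset.Ico_disjoint_Ico_consecutive _ _ _
    rw [hE, hS, ← Finset.sum_union hdis]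
    exact Finset.sum_le_sum_of_subset_of_nonneg hsub fun k _ _ => by positivity
  rw [one_div_mul_eq_div, div_le_iff₀ (by positivity)]
  have r1 : (1 + E) * ξ i ^ 2 ≤ symbol d J ξ * ((1 + E) / A1) := by
    have : ξ i ^ 2 ≤ symbol d J ξ / A1 := by rw [le_div_iff₀ hA1p]; linarith
    calc _ ≤ (1 + E) * (symbol d J ξ / A1) := mul_le_mul_of_nonneg_left this (by positivity)
      _ = _ := by ring
  have r2 : ξ i ^ 2 * S ≤ symbol d J ξ * (1 / A2) := by
    rw [mul_one_div, le_div_iff₀ hA2p]; linarith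
  have r3 := mul_le_mul_of_nonneg_left hsum (sq_nonneg (ξ i))
  linarith

/-! ### Assembly -/

lemma norm_facts (d : ℕ) (ξ : Fin d → ℝ) (i : Fin d) (hi : ∀ j, |ξ j| ≤ |ξ i|) :
    |ξ i| ≤ Real.sqrt (∑ j, ξ j ^ 2) ∧ Real.sqrt (∑ j, ξ j ^ 2) ≤ d * |ξ i| := by
  have hd1 : (1 : ℝ) ≤ d := by exact_mod_cast (Nat.one_le_iff_ne_zero.mpr (by rintro rfl; exact i.elim0))
  constructor
  · apply Real.abs_le_sqrt
    exact Finset.single_le_sum (f := fun j => ξ j ^ 2) (fun j _ => sq_nonneg _) (Finset.mem_univ i)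
  · rw [Real.sqrt_le_iff]
    refine ⟨by positivity, ?_⟩
    have h : ∑ j, ξ j ^ 2 ≤ ∑ _j : Fin d, ξ i ^ 2 :=
      Finset.sum_le_sum fun j _ => sq_le_sq.mpr (hi j)
    rw [Finset.sum_const, Finset.card_univ, Fintype.card_fin, nsmul_eq_mul] at h
    rw [mul_pow, sq_abs]
    have : (d : ℝ) * ξ i ^ 2 ≤ d ^ 2 * ξ i ^ 2 :=
      mul_le_mul_of_nonneg_right (by nlinarith) (sq_nonneg _)
    linarith

lemma exists_max_coord (d : ℕ) (hd : 1 ≤ d) (ξ : Fin d → ℝ) :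
    ∃ i : Fin d, ∀ j, |ξ j| ≤ |ξ i| := by
  have : Nonempty (Fin d) := ⟨⟨0, hd⟩⟩
  exact Finite.exists_max fun j => |ξ j|

lemma order_upper (J : ℕ → ℝ) (e A : ℝ)
    (h : Tendsto (fun k : ℕ => (k : ℝ) ^ e * J k) atTop (𝓝 A)) :
    ∃ B : ℝ, 0 < B ∧ ∀ k : ℕ, 1 ≤ k → J k ≤ B * (k : ℝ) ^ (-e) := by
  obtain ⟨B, hB⟩ := h.bddAbove_range
  refine ⟨max B 1, by positivity, fun k hk => ?_⟩
  have hkp : (0 : ℝ) < k := by exact_mod_cast hk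
  have h1 : (k : ℝ) ^ e * J k ≤ max B 1 := (hB ⟨k, rfl⟩).trans (le_max_left _ _)
  rw [Real.rpow_neg hkp.le, ← div_eq_mul_inv, le_div_iff₀ (Real.rpow_pos_of_pos hkp _)]
  linarith

lemma order_lower (J : ℕ → ℝ) (e A : ℝ) (hA : 0 < A)
    (h : Tendsto (fun k : ℕ => (k : ℝ) ^ e * J k) atTop (𝓝 A)) :
    ∃ b : ℝ, 0 < b ∧ ∃ k0 : ℕ, 1 ≤ k0 ∧ ∀ k : ℕ, k0 ≤ k → b * (k : ℝ) ^ (-e) ≤ J k := by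
  obtain ⟨n, hn⟩ := eventually_atTop.mp (h.eventually (lt_mem_nhds (half_lt_self hA)))
  refine ⟨A / 2, by positivity, max n 1, le_max_right _ _, fun k hk => ?_⟩
  have hkp : (0 : ℝ) < k := by exact_mod_cast (le_max_right n 1).trans hk
  have h1 := hn k ((le_max_left n 1).trans hk)
  rw [Real.rpow_neg hkp.le, ← div_eq_mul_inv, div_le_iff₀ (Real.rpow_pos_of_pos hkp _)]
  linarith

lemma min_sum_le (a : ℝ) (ha : 0 < a) (R : ℝ) (hR : 0 ≤ R) (K : ℕ) (hK : 1 ≤ K) (M : ℕ) :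
    ∑ k ∈ Finset.Ico 1 (M + 1), (k : ℝ) ^ (-1 - a) * min 1 ((k : ℝ) ^ 2 * R) ≤
      R * ∑ k ∈ Finset.Ico 1 (K + 1), (k : ℝ) ^ (1 - a) + (1 / a) * (K : ℝ) ^ (-a) := by
  have hsub : Finset.Ico 1 (M + 1) ⊆ Finset.Ico 1 (K + 1) ∪ Finset.Ico (K + 1) (M + 1) := by
    intro k; simp only [Finset.mem_union, Finset.mem_Ico]; omega
  have hdis : Disjoint (Finset.Ico 1 (K + 1)) (Finset.Ico (K + 1) (M + 1)) :=
    Finset.Ico_disjoint_Ico_consecutive _ _ _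
  refine (Finset.sum_le_sum_of_subset_of_nonneg hsub fun k _ _ => by positivity).trans ?_
  rw [Finset.sum_union hdis]
  refine add_le_add ?_ (le_trans (Finset.sum_le_sum fun k _ => ?_) (aux_tail a ha K hK M))
  · rw [Finset.mul_sum]
    refine Finset.sum_le_sum fun k hk => ?_
    have hkp : (0 : ℝ) < k := by exact_mod_cast (Finset.mem_Ico.mp hk).1
    have e : (k : ℝ) ^ (1 - a) = (k : ℝ) ^ (-1 - a) * (k : ℝ) ^ 2 := by
      rw [← Real.rpow_natCast, ← Real.rpow_add hkp]; congr 1; push_cast; ring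
    rw [e]
    calc _ ≤ (k : ℝ) ^ (-1 - a) * ((k : ℝ) ^ 2 * R) :=
          mul_le_mul_of_nonneg_left (min_le_right _ _) (by positivity)
      _ = _ := by ring
  · exact mul_le_of_le_one_right (by positivity) (min_le_left _ _)

lemma upper_gt (a : ℝ) (ha : 2 < a) (R : ℝ) (hR : 0 ≤ R) (M : ℕ) :
    ∑ k ∈ Finset.Ico 1 (M + 1), (k : ℝ) ^ (-1 - a) * min 1 ((k : ℝ) ^ 2 * R) ≤
      (1 + 1 / (a - 2)) * R := by
  have h1 : ∑ k ∈ Finset.Ico 1 (M + 1), (k : ℝ) ^ (-1 - a) * min 1 ((k : ℝ) ^ 2 * R) ≤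
      R * ∑ k ∈ Finset.Ico 1 (M + 1), (k : ℝ) ^ (1 - a) := by
    rw [Finset.mul_sum]
    refine Finset.sum_le_sum fun k hk => ?_
    have hkp : (0 : ℝ) < k := by exact_mod_cast (Finset.mem_Ico.mp hk).1
    have e : (k : ℝ) ^ (1 - a) = (k : ℝ) ^ (-1 - a) * (k : ℝ) ^ 2 := by
      rw [← Real.rpow_natCast, ← Real.rpow_add hkp]; congr 1; push_cast; ring
    rw [e]
    calc _ ≤ (k : ℝ) ^ (-1 - a) * ((k : ℝ) ^ 2 * R) :=
          mul_le_mul_of_nonneg_left (min_le_right _ _) (by positivity)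
      _ = _ := by ring
  have hq : 0 < a - 2 := by linarith
  have h2 : ∑ k ∈ Finset.Ico 1 (M + 1), (k : ℝ) ^ (1 - a) ≤ 1 + 1 / (a - 2) := by
    have h3 := aux_tail (a - 2) hq 1 le_rfl M
    rw [show -1 - (a - 2) = 1 - a by ring] at h3
    rcases Nat.eq_zero_or_pos M with h | h
    · subst h; simp; positivity
    · rw [Finset.sum_eq_sum_Ico_succ_bot (by omega)]
      simp only [Nat.cast_one, Real.one_rpow] at h3 ⊢
      linarith
  have := mul_le_mul_of_nonneg_left h2 hR
  linarith

lemma ceil_facts (r : ℝ) (hr : 0 < r) :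
    1 ≤ ⌈1 / r⌉₊ ∧ 1 / r ≤ (⌈1 / r⌉₊ : ℝ) ∧ (⌈1 / r⌉₊ : ℝ) ≤ 1 / r + 1 := by
  refine ⟨Nat.one_le_ceil_iff.mpr (by positivity), Nat.le_ceil _, ?_⟩
  exact (Nat.ceil_lt_add_one (by positivity)).le

lemma ceil_tail (a : ℝ) (ha : 0 < a) (r : ℝ) (hr : 0 < r) :
    (⌈1 / r⌉₊ : ℝ) ^ (-a) ≤ r ^ a := by
  have h := (ceil_facts r hr).2.1
  have h1 := Real.rpow_le_rpow_of_nonpos (by positivity) h (neg_nonpos.mpr ha.le)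
  refine h1.trans_eq ?_
  rw [one_div, Real.inv_rpow hr.le, Real.rpow_neg hr.le, inv_inv]

lemma upper_lt (a : ℝ) (ha : 0 < a) (ha2 : a < 2) (T : ℝ) (hT : 0 < T) :
    ∃ C : ℝ, 0 < C ∧ ∀ r : ℝ, 0 ≤ r → r ≤ T → ∀ M : ℕ,
    ∑ k ∈ Finset.Ico 1 (M + 1), (k : ℝ) ^ (-1 - a) * min 1 ((k : ℝ) ^ 2 * r ^ 2) ≤
      C * r ^ a := by
  have hp : 0 < 2 - a := by linarith
  set p := 2 - a with hpdef
  refine ⟨((1 + p) / p) * (1 + T) ^ p + 1 / a, by positivity, fun r hr hrT M => ?_⟩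
  rcases hr.eq_or_lt with h0 | hr
  · rw [← h0]; simp [Real.zero_rpow ha.ne']
  obtain ⟨c1, c2, c3⟩ := ceil_facts r hr
  have h1 := min_sum_le a ha (r ^ 2) (sq_nonneg r) _ c1 M
  have h2 := aux_up p hp ⌈1 / r⌉₊
  rw [show p - 1 = 1 - a by rw [hpdef]; ring] at h2
  have h3 : r ^ 2 * (⌈1 / r⌉₊ : ℝ) ^ p ≤ (1 + T) ^ p * r ^ a := by
    have h4 : (⌈1 / r⌉₊ : ℝ) ^ p ≤ ((1 + T) / r) ^ p := by
      apply Real.rpow_le_rpow (by positivity) _ hp.le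
      refine c3.trans ?_
      rw [div_add_one hr.ne']
      exact div_le_div_of_nonneg_right (by linarith) hr.le
    refine (mul_le_mul_of_nonneg_left h4 (sq_nonneg r)).trans_eq ?_
    have e : r ^ a = r ^ 2 / r ^ p := by
      rw [← Real.rpow_two, ← Real.rpow_sub hr]; congr 1; rw [hpdef]; ring
    rw [Real.div_rpow (by positivity) hr.le, e]
    ring
  have h5 := ceil_tail a ha r hr
  have h6 := mul_le_mul_of_nonneg_left h2 (sq_nonneg r)
  have h7 := mul_le_mul_of_nonneg_left h3 (by positivity : 0 ≤ (1 + p) / p)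
  have h8 := mul_le_mul_of_nonneg_left h5 (by positivity : 0 ≤ 1 / a)
  linarith

lemma upper_eq (r : ℝ) (hr : 0 ≤ r) (M : ℕ) :
    ∑ k ∈ Finset.Ico 1 (M + 1), (k : ℝ) ^ (-1 - 2 : ℝ) * min 1 ((k : ℝ) ^ 2 * r ^ 2) ≤
      3 * (r ^ 2 * (1 + |Real.log r|)) := by
  rcases hr.eq_or_lt with h0 | hr
  · rw [← h0]; simp
  obtain ⟨c1, c2, c3⟩ := ceil_facts r hr
  have h1 := min_sum_le 2 two_pos (r ^ 2) (sq_nonneg r) _ c1 M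
  have h2 := aux_log_up _ c1
  rw [show (1 - 2 : ℝ) = -1 by norm_num] at h1
  have hlog : Real.log (⌈1 / r⌉₊ : ℝ) ≤ 1 + |Real.log r| := by
    have hpos : (0 : ℝ) < ⌈1 / r⌉₊ := by exact_mod_cast c1
    have hl2 : Real.log 2 ≤ 1 := by linarith [Real.log_two_lt_d9]
    rcases le_total r 1 with h | h
    · have : (⌈1 / r⌉₊ : ℝ) ≤ 2 / r := by
        have : 1 ≤ 1 / r := by rw [le_div_iff₀ hr]; linarith
        have e : 2 / r = 1 / r + 1 / r := by ring
        linarith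
      have h3 := Real.log_le_log hpos this
      rw [Real.log_div two_ne_zero hr.ne'] at h3
      linarith [neg_abs_le (Real.log r)]
    · have : (⌈1 / r⌉₊ : ℝ) ≤ 2 := by
        have : 1 / r ≤ 1 := by rw [div_le_iff₀ hr]; linarith
        linarith
      have h3 := Real.log_le_log hpos this
      linarith [abs_nonneg (Real.log r)]
  have h5 := ceil_tail 2 two_pos r hr
  rw [Real.rpow_two] at h5
  have h6 := mul_le_mul_of_nonneg_left (h2.trans (add_le_add_right hlog 1)) (sq_nonneg r)
  have h7 : 0 ≤ r ^ 2 * |Real.log r| := by positivity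
  refine h1.trans ?_
  have h8 := mul_le_mul_of_nonneg_left h5 (by norm_num : (0 : ℝ) ≤ 1 / 2)
  refine (add_le_add h6 h8).trans ?_
  linarith [sq_nonneg r]

lemma floor_facts (d : ℕ) (hd : 1 ≤ d) (s : ℝ) (hs : 0 < s) :
    (⌊1 / (d * s)⌋₊ : ℝ) * d * s ≤ Real.pi ∧ 1 / (d * s) ≤ ((⌊1 / (d * s)⌋₊ + 1 : ℕ) : ℝ) := by
  have hd0 : (0 : ℝ) < d := by exact_mod_cast hd
  constructor
  · have h : (⌊1 / (d * s)⌋₊ : ℝ) ≤ 1 / (d * s) := Nat.floor_le (by positivity)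
    rw [le_div_iff₀ (by positivity)] at h
    linarith [Real.pi_gt_three]
  · push_cast
    exact (Nat.lt_floor_add_one _).le

/-- Lower one-dimensional comparison, `a < 2`. -/
lemma lower_lt (d : ℕ) (hd : 1 ≤ d) (a : ℝ) (ha : 0 < a) (ha2 : a < 2) :
    ∃ c : ℝ, 0 < c ∧ ∀ s r : ℝ, 0 < s → 0 ≤ r → r ≤ d * s →
      c * r ^ a ≤ s ^ 2 *
        (1 + ∑ k ∈ Finset.Ico 1 (⌊1 / (d * s)⌋₊ + 1), (k : ℝ) ^ (1 - a)) := by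
  have hd0 : (0 : ℝ) < d := by exact_mod_cast hd
  have hp : 0 < 2 - a := by linarith
  set p := 2 - a with hpdef
  set G := 1 + p * Real.exp p with hG
  have hGp : 0 < G := by positivity
  refine ⟨1 / (G * d ^ 2), by positivity, fun s r hs hr hrs => ?_⟩
  have h1 := aux_low p hp ⌊1 / (d * s)⌋₊
  rw [show p - 1 = 1 - a by rw [hpdef]; ring] at h1
  set S := ∑ k ∈ Finset.Ico 1 (⌊1 / (d * s)⌋₊ + 1), (k : ℝ) ^ (1 - a) with hS
  have hS0 : 0 ≤ S := Finset.sum_nonneg fun k _ => by positivity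
  have h2 : (1 / (d * s)) ^ p ≤ G * (1 + S) := by
    have := Real.rpow_le_rpow (by positivity) (floor_facts d hd s hs).2 hp.le
    have h3 : 0 < p * Real.exp p := by positivity
    rw [hG]; nlinarith
  have h3 : r ^ a ≤ (d * s) ^ a := Real.rpow_le_rpow hr hrs ha.le
  have h4 : (d * s) ^ a = (d * s) ^ 2 * (1 / (d * s)) ^ p := by
    rw [one_div, Real.inv_rpow (by positivity), ← Real.rpow_neg (by positivity),
      ← Real.rpow_two, ← Real.rpow_add (by positivity)]
    congr 1; rw [hpdef]; ring
  rw [one_div_mul_eq_div, div_le_iff₀ (by positivity)]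
  calc r ^ a ≤ (d * s) ^ 2 * (1 / (d * s)) ^ p := by rw [← h4]; exact h3
    _ ≤ (d * s) ^ 2 * (G * (1 + S)) := mul_le_mul_of_nonneg_left h2 (by positivity)
    _ = _ := by ring

/-- Lower one-dimensional comparison, `a = 2`. -/
lemma lower_eq (d : ℕ) (hd : 1 ≤ d) (T : ℝ) :
    ∃ c : ℝ, 0 < c ∧ ∀ s r : ℝ, 0 < s → s ≤ r → r ≤ d * s → r ≤ T →
      c * (r ^ 2 * (1 + |Real.log r|)) ≤ s ^ 2 *
        (1 + ∑ k ∈ Finset.Ico 1 (⌊1 / (d * s)⌋₊ + 1), (k : ℝ) ^ (1 - 2 : ℝ)) := by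
  have hd0 : (0 : ℝ) < d := by exact_mod_cast hd
  have hd1 : (1 : ℝ) ≤ d := by exact_mod_cast hd
  have hld : 0 ≤ Real.log d := Real.log_nonneg hd1
  set G := 1 + Real.log d + |Real.log T| with hG
  have hG1 : 1 ≤ G := by rw [hG]; linarith [abs_nonneg (Real.log T)]
  refine ⟨1 / (G * d ^ 2), by positivity, fun s r hs hsr hrs hrT => ?_⟩
  have hr : 0 < r := hs.trans_le hsr
  have h1 := aux_log_low ⌊1 / (d * s)⌋₊
  rw [show (1 - 2 : ℝ) = -1 by norm_num]
  set S := ∑ k ∈ Finset.Ico 1 (⌊1 / (d * s)⌋₊ + 1), (k : ℝ) ^ (-1 : ℝ) with hS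
  have hS0 : 0 ≤ S := Finset.sum_nonneg fun k _ => by positivity
  have h2 : -Real.log d - Real.log s ≤ S := by
    have := Real.log_le_log (by positivity) (floor_facts d hd s hs).2
    have e : Real.log (1 / (d * s)) = -(Real.log d + Real.log s) := by
      rw [one_div, Real.log_inv, Real.log_mul hd0.ne' hs.ne']
    linarith
  have h3 : 1 + |Real.log r| ≤ G * (1 + S) := by
    have h4 : 1 + |Real.log r| ≤ G + S := by
      rcases le_total r 1 with h | h
      · rw [abs_of_nonpos (Real.log_nonpos hr.le h)]
        have := Real.log_le_log hs hsr
        rw [hG]; linarith [abs_nonneg (Real.log T)]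
      · rw [abs_of_nonneg (Real.log_nonneg h)]
        have := Real.log_le_log hr hrT
        rw [hG]; linarith [le_abs_self (Real.log T)]
    nlinarith
  have h5 : r ^ 2 ≤ (d * s) ^ 2 := pow_le_pow_left₀ hr.le hrs 2
  rw [one_div_mul_eq_div, div_le_iff₀ (by positivity)]
  calc r ^ 2 * (1 + |Real.log r|) ≤ (d * s) ^ 2 * (G * (1 + S)) :=
        mul_le_mul h5 h3 (by positivity) (by positivity)
    _ = _ := by ring

lemma symbol_nonneg (d : ℕ) (J : ℕ → ℝ) (hJ : ∀ k, 0 ≤ J k) (ξ : Fin d → ℝ) :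
    0 ≤ symbol d J ξ := by
  rw [symbol_eq]
  exact mul_nonneg two_pos.le (tsum_nonneg fun m => symTerm_nonneg d J hJ ξ m)

lemma lower_quad (d : ℕ) (hd : 1 ≤ d) (J : ℕ → ℝ) (hJ : ∀ k, 0 ≤ J k)
    (hs : Summable (JbarSummand d J)) (hJ1 : 0 < J 1) :
    ∃ c : ℝ, 0 < c ∧ ∀ ξ : Fin d → ℝ, (∀ i, |ξ i| ≤ Real.pi) →
      c * Real.sqrt (∑ i, ξ i ^ 2) ^ 2 ≤ symbol d J ξ := by
  have hπ := Real.pi_pos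
  have hd0 : (0 : ℝ) < d := by exact_mod_cast hd
  refine ⟨(2 * J 1 / Real.pi ^ 2) / d ^ 2, by positivity, fun ξ hξ => ?_⟩
  obtain ⟨i, hi⟩ := exists_max_coord d hd ξ
  have h1 := symbol_lower_quad d J hJ hs ξ hξ i
  have h2 := pow_le_pow_left₀ (Real.sqrt_nonneg _) (norm_facts d ξ i hi).2 2
  rw [mul_pow, sq_abs] at h2
  refine le_trans ?_ h1
  rw [div_mul_eq_mul_div, div_le_iff₀ (by positivity)]
  have := mul_le_mul_of_nonneg_left h2 (by positivity : 0 ≤ 2 * J 1 / Real.pi ^ 2)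
  linarith

theorem stmt5 (d : ℕ) (hd : 1 ≤ d) (J : ℕ → ℝ)
    (hJpos : ∀ k, 0 ≤ J k) (hJbar : Summable (JbarSummand d J)) (hJ1 : 0 < J 1)
    (α : ℝ≥0∞) (hα : 0 < α) (horder : JOrder d J α) :
    ∃ c C : ℝ, 0 < c ∧ 0 < C ∧ ∀ ξ : Fin d → ℝ, (∀ i, |ξ i| ≤ Real.pi) →
      c * deltaFun α (Real.sqrt (∑ i, ξ i ^ 2)) ≤ symbol d J ξ ∧
      symbol d J ξ ≤ C * deltaFun α (Real.sqrt (∑ i, ξ i ^ 2)) := by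
  have hπ := Real.pi_pos
  have hd0 : (0 : ℝ) < d := by exact_mod_cast hd
  have hrle : ∀ ξ : Fin d → ℝ, (∀ i, |ξ i| ≤ Real.pi) →
      Real.sqrt (∑ i, ξ i ^ 2) ≤ d * Real.pi := by
    intro ξ hξ
    obtain ⟨i, hi⟩ := exists_max_coord d hd ξ
    exact (norm_facts d ξ i hi).2.trans (mul_le_mul_of_nonneg_left (hξ i) hd0.le)
  have hsq : ∀ ξ : Fin d → ℝ, Real.sqrt (∑ i, ξ i ^ 2) ^ 2 = ∑ i, ξ i ^ 2 := fun ξ =>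
    Real.sq_sqrt (Finset.sum_nonneg fun i _ => sq_nonneg _)
  -- the case of a quadratic bound
  have hquad : ∀ a : ℝ, 2 < a →
      (∃ B : ℝ, 0 < B ∧ ∀ k : ℕ, 1 ≤ k → J k ≤ B * (k : ℝ) ^ (-((d : ℝ) + a))) →
      ∃ c C : ℝ, 0 < c ∧ 0 < C ∧ ∀ ξ : Fin d → ℝ, (∀ i, |ξ i| ≤ Real.pi) →
        c * Real.sqrt (∑ i, ξ i ^ 2) ^ 2 ≤ symbol d J ξ ∧
        symbol d J ξ ≤ C * Real.sqrt (∑ i, ξ i ^ 2) ^ 2 := by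
    rintro a ha ⟨B, hB0, hB⟩
    obtain ⟨c, hc, hcl⟩ := lower_quad d hd J hJpos hJbar hJ1
    obtain ⟨C, hC, hCu⟩ := symbol_upper d hd J hJpos hJbar a B hB0 hB
    have hq : 0 < a - 2 := by linarith
    refine ⟨c, C * (1 + 1 / (a - 2)), hc, by positivity, fun ξ hξ => ⟨hcl ξ hξ, ?_⟩⟩
    rw [mul_assoc, hsq]
    exact hCu ξ _ fun M => upper_gt a ha _ (Finset.sum_nonneg fun i _ => sq_nonneg _) M
  by_cases htop : α = ⊤
  · subst htop
    have hdel : ∀ r, deltaFun ⊤ r = r ^ 2 := fun r => by simp [deltaFun]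
    simp only [hdel]
    rw [JOrder, if_pos rfl] at horder
    exact hquad 3 (by norm_num) (order_upper J _ 0 (horder 3 (by norm_num)))
  rw [JOrder, if_neg htop] at horder
  obtain ⟨A, hA, hlim⟩ := horder
  set a := α.toReal with ha
  have hαa : α = ENNReal.ofReal a := (ENNReal.ofReal_toReal htop).symm
  have ha0 : 0 < a := ENNReal.toReal_pos hα.ne' htop
  have h2 : (2 : ℝ≥0∞) = ENNReal.ofReal 2 := by simp
  have hlt_iff : α < 2 ↔ a < 2 := by
    rw [hαa, h2, ENNReal.ofReal_lt_ofReal_iff two_pos]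
  have heq_iff : α = 2 ↔ a = 2 := by
    rw [hαa, h2, ENNReal.ofReal_eq_ofReal_iff ha0.le two_pos.le]
  obtain ⟨B, hB0, hB⟩ := order_upper J _ A hlim
  rcases lt_trichotomy a 2 with hlt | heq | hgt
  · have hdel : ∀ r, deltaFun α r = r ^ a := fun r => by
      rw [deltaFun, if_pos (hlt_iff.mpr hlt)]
    simp only [hdel]
    obtain ⟨b, hb, k0, hk0, hlow⟩ := order_lower J _ A hA hlim
    obtain ⟨c, hc, hcl⟩ := symbol_lower d hd J hJpos hJbar hJ1 a b hb k0 hk0 hlow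
    obtain ⟨c_alt, hc_alt, hcl_alt⟩ := lower_lt d hd a ha0 hlt
    obtain ⟨C, hC, hCu⟩ := symbol_upper d hd J hJpos hJbar a B hB0 hB
    obtain ⟨C_alt, hC_alt, hCu_alt⟩ := upper_lt a ha0 hlt (d * Real.pi) (by positivity)
    refine ⟨c * c_alt, C * C_alt, by positivity, by positivity, fun ξ hξ => ⟨?_, ?_⟩⟩
    · obtain ⟨i, hi⟩ := exists_max_coord d hd ξ
      obtain ⟨f1, f2⟩ := norm_facts d ξ i hi
      rcases (abs_nonneg (ξ i)).eq_or_lt with h0 | hs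
      · have : Real.sqrt (∑ j, ξ j ^ 2) = 0 :=
          le_antisymm (by rw [← h0, mul_zero] at f2; exact f2) (Real.sqrt_nonneg _)
        rw [this, Real.zero_rpow ha0.ne', mul_zero]
        exact symbol_nonneg d J hJpos ξ
      · have g1 := hcl ξ hξ i hi _ (floor_facts d hd _ hs).1
        have g2 := hcl_alt _ _ hs (Real.sqrt_nonneg _) f2
        rw [sq_abs] at g2
        rw [mul_assoc]
        exact (mul_le_mul_of_nonneg_left g2 hc.le).trans g1
    · rw [mul_assoc]
      refine hCu ξ _ fun M => ?_
      have := hCu_alt _ (Real.sqrt_nonneg _) (hrle ξ hξ) M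
      rwa [hsq] at this
  · have hdel : ∀ r, deltaFun α r = r ^ 2 * (1 + |Real.log r|) := fun r => by
      rw [deltaFun, if_neg (by rw [hlt_iff]; linarith), if_pos (heq_iff.mpr heq)]
    simp only [hdel]
    obtain ⟨b, hb, k0, hk0, hlow⟩ := order_lower J _ A hA hlim
    rw [heq] at hlow hB
    obtain ⟨c, hc, hcl⟩ := symbol_lower d hd J hJpos hJbar hJ1 2 b hb k0 hk0 hlow
    obtain ⟨c_alt, hc_alt, hcl_alt⟩ := lower_eq d hd (d * Real.pi)
    obtain ⟨C, hC, hCu⟩ := symbol_upper d hd J hJpos hJbar 2 B hB0 hB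
    refine ⟨c * c_alt, C * 3, by positivity, by positivity, fun ξ hξ => ⟨?_, ?_⟩⟩
    · obtain ⟨i, hi⟩ := exists_max_coord d hd ξ
      obtain ⟨f1, f2⟩ := norm_facts d ξ i hi
      rcases (abs_nonneg (ξ i)).eq_or_lt with h0 | hs
      · have : Real.sqrt (∑ j, ξ j ^ 2) = 0 :=
          le_antisymm (by rw [← h0, mul_zero] at f2; exact f2) (Real.sqrt_nonneg _)
        rw [this]
        simpa using symbol_nonneg d J hJpos ξ
      · have g1 := hcl ξ hξ i hi _ (floor_facts d hd _ hs).1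
        have g2 := hcl_alt _ _ hs f1 f2 (hrle ξ hξ)
        rw [sq_abs] at g2
        rw [mul_assoc]
        exact (mul_le_mul_of_nonneg_left g2 hc.le).trans g1
    · rw [mul_assoc]
      refine hCu ξ _ fun M => ?_
      have := upper_eq _ (Real.sqrt_nonneg (∑ i, ξ i ^ 2)) M
      rw [hsq] at this ⊢
      exact this
  · have hdel : ∀ r, deltaFun α r = r ^ 2 := fun r => by
      rw [deltaFun, if_neg (by rw [hlt_iff]; linarith),
        if_neg (by rw [heq_iff]; exact hgt.ne')]
    simp only [hdel]
    exact hquad a hgt ⟨B, hB0, hB⟩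
end
end
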